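/- (Twist identity.) Let Γ be a completed primitive simple graph whose vertex set is partitioned as V = V₁ ⊔ V₂ ⊔ {a,b,c,d} with V₁ and V₂ nonempty and with no edge of Γ joining V₁ to V₂. Let τ : V → V be the permutation exchanging a ↔ b and c ↔ d and fixing all other vertices. Let Γ₀ be the graph on V whose edge set consists of: all edges of Γ having at least one endpoint in V₁ or lying entirely inside {a,b,c,d}, together with the images under τ of all edges of Γ having at least one endpoint in V₂. Suppose that Γ̃ is a simple 4-regular graph obtained from Γ₀ either with no further change, or after performing one or both of the following edge swaps inside {a,b,c,d}: replacing the edge ac by bd (or bd by ac), and/or replacing the edge ad by bc (or bc by ad). Then Γ̃ is completed primitive and the periods coincide: P_Γ = P_{Γ̃}. -/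

import Mathlib

/-!
The twist identity rests on the conformal covariance of the propagator `‖x - y‖⁻²` in dimension 4.
For `‖e‖ = 1` and `t ≠ 0` let `R` be the reflection exchanging `e` and `t / ‖t‖`. The map
`φ y = ‖t‖ R (y / ‖y‖²)` (`twistMap`) exchanges `0` with `∞` and `e` with `t`, and
`‖φ y - φ y'‖² = λ(y) λ(y') ‖y - y'‖²` with `λ(y) = ‖t‖ / ‖y‖²` (`twistFactor`), while its Jacobian
is `λ⁴`. In a 4-regular graph the factor `λ(x_v)` of a vertex occurs once per incident edge, so
the Jacobian at every integrated vertex is cancelled exactly by the four propagators meeting there.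

All integrands are nonnegative, so the periods are handled as integrals with values in `[0, ∞]`
(`periodLIntegral`), for which Tonelli and the change of variables need no convergence statement;
the Bochner integral is recovered by `toReal` (`positionIntegral_eq`).

*Choice of gauge.* Applying `φ` to all vertices shows that the integral with `(u, w, z)` at
`(∞, 0, e)` equals the one with `(w, u, v)` there, for any fourth vertex `v`
(`periodLIntegral_swap`). Together with Euclidean motions this gives independence of all choices
(`periodLIntegral_indep`).

*Twist.* Place `a, b, c` at `∞, 0, e` and integrate over the position `t` of `d` last. For fixed `t`
apply `φ` to the vertices of `V₂` only. Since `φ` realises the permutation `τ` on the four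
separating points and no edge joins `V₁` to `V₂`, the propagators of the edges meeting `V₂` become
those of their images under `τ`, up to conformal factors (`TwistSetup.totalWeight_eq`). The factors
left at `a, b, c, d` are balanced by vertex weights `‖t‖^{∓1/2}` on both 4-regular graphs; with these
weights the pairs `ac, bd`, and also `ad, bc`, carry equal values, so the edge swaps do not matter.

*Completed primitivity.* The same comparison of edge sums (`TwistSetup.sum_eq`) applies to the
indicator of a cut by `A`. If `A` contains both or none of `a, b` and of `c, d`, the cut has
the same size in both graphs. If `A` separates both pairs, it corresponds to the cut of `G` obtained
by complementing `A` inside `V₂`. If, up to passing to the complement, `A` contains exactly one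
separating vertex `q`, its excess over 4 is the sum of the excesses of the cuts of `G` by
`(A ∩ V₁) ∪ {q}` and `(A ∩ V₂) ∪ {τ q}`. Connectedness follows from the cut bounds.
-/

open scoped Classical

/-- The set of edges of `G` with one endpoint in `A` and the other outside `A`. -/
noncomputable def cutEdges {V : Type*} [Fintype V] (G : SimpleGraph V) (A : Finset V) :
    Finset (Sym2 V) :=
  G.edgeFinset.filter (fun e => ∃ x, x ∈ e ∧ x ∈ A ∧ ∃ y, y ∈ e ∧ y ∉ A)

/-- A finite simple graph is *completed primitive* if it is 4-regular, connected, has at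
least 3 vertices, and every edge cut separating two parts with at least two vertices each
has size strictly greater than 4. -/
def CompletedPrimitive {V : Type*} [Fintype V] (G : SimpleGraph V) : Prop :=
  (∀ v : V, G.degree v = 4) ∧ G.Connected ∧ 3 ≤ Fintype.card V ∧
    ∀ A : Finset V, 2 ≤ A.card → 2 ≤ Aᶜ.card → 4 < (cutEdges G A).card

open scoped Classical
open MeasureTheory

/-- 4-dimensional Euclidean space. -/
abbrev R4 := EuclideanSpace ℝ (Fin 4)

/-- Extension of an assignment `x` of position vectors to the vertices outside `{u,w,z}`
by `x_w = 0` and `x_z = e` (the value at `u` is irrelevant). -/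
noncomputable def extendPos {V : Type*} (u w z : V) (e : R4)
    (x : {v : V // v ≠ u ∧ v ≠ w ∧ v ≠ z} → R4) (v : V) : R4 :=
  if v = w then 0
  else if v = z then e
  else if h : v ≠ u ∧ v ≠ w ∧ v ≠ z then x ⟨v, h⟩ else 0

/-- The position-space integrand of the period: the product over all edges of `Γ` not
meeting `u` of `‖x_i − x_j‖⁻²`. -/
noncomputable def periodIntegrand {V : Type*} [Fintype V] (G : SimpleGraph V)
    (u w z : V) (e : R4) (x : {v : V // v ≠ u ∧ v ≠ w ∧ v ≠ z} → R4) : ℝ :=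
  ∏ ed ∈ G.edgeFinset.filter (fun ed => u ∉ ed),
    Sym2.lift ⟨fun i j => (‖extendPos u w z e x i - extendPos u w z e x j‖ ^ 2)⁻¹,
      fun i j => by simp [norm_sub_rev]⟩ ed

/-- The affine position-space integral `I(u,w,z,e)` of a graph. -/
noncomputable def positionIntegral {V : Type*} [Fintype V] (G : SimpleGraph V)
    (u w z : V) (e : R4) : ℝ :=
  ∫ x : {v : V // v ≠ u ∧ v ≠ w ∧ v ≠ z} → R4, periodIntegrand G u w z e x

/-- The period of a completed primitive graph on `ℓ + 2` vertices, computed in affine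
position space: `P_Γ = π^{−2(ℓ−1)} I(u,w,z,e)`. -/
noncomputable def period {V : Type*} [Fintype V] (G : SimpleGraph V)
    (u w z : V) (e : R4) : ℝ :=
  (Real.pi ^ (2 * (Fintype.card V - 3)))⁻¹ * positionIntegral G u w z e

/-- The permutation `τ` exchanging `a ↔ b` and `c ↔ d`. -/
noncomputable def twistPerm {V : Type*} (a b c d : V) : Equiv.Perm V :=
  (Equiv.swap a b).trans (Equiv.swap c d)

/-- The twisted graph `Γ₀`: the edges of `Γ` with an endpoint in `V₁` or lying inside
`{a,b,c,d}`, together with the images under `τ` of the edges of `Γ` with an endpoint in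
`V₂`. -/
noncomputable def twistGraph {V : Type*} (G : SimpleGraph V) (V₁ V₂ : Finset V)
    (a b c d : V) : SimpleGraph V :=
  SimpleGraph.fromRel (fun x y =>
    (G.Adj x y ∧ (x ∈ V₁ ∨ y ∈ V₁ ∨
      ((x = a ∨ x = b ∨ x = c ∨ x = d) ∧ (y = a ∨ y = b ∨ y = c ∨ y = d)))) ∨
    (G.Adj (twistPerm a b c d x) (twistPerm a b c d y) ∧ (x ∈ V₂ ∨ y ∈ V₂)))

/-- `E'` is obtained from `E` either unchanged, or by replacing the edge `p` by `q`, or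
by replacing the edge `q` by `p`. -/
def SwapOpt {V : Type*} (E : Finset (Sym2 V)) (p q : Sym2 V) (E' : Finset (Sym2 V)) : Prop :=
  E' = E ∨ (p ∈ E ∧ q ∉ E ∧ E' = insert q (E.erase p)) ∨
    (q ∈ E ∧ p ∉ E ∧ E' = insert p (E.erase q))

/-! ### Integration over vertex positions -/

open scoped ENNReal

/-- Lebesgue measure for a free vertex, a point mass for a vertex with prescribed position. -/
noncomputable def vertexMeasure : Option R4 → Measure R4
  | none => volume
  | some p => Measure.dirac p

instance vertexMeasure.sigmaFinite (p : Option R4) : SigmaFinite (vertexMeasure p) := by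
  cases p <;> unfold vertexMeasure <;> infer_instance

/-- The measure on vertex positions in which the vertices with `P i = some p` are fixed at `p` and
all others are integrated over. -/
noncomputable def posMeasure {V : Type*} [Fintype V] (P : V → Option R4) : Measure (V → R4) :=
  Measure.pi fun i => vertexMeasure (P i)

instance posMeasure.sigmaFinite {V : Type*} [Fintype V] (P : V → Option R4) :
    SigmaFinite (posMeasure P) :=
  Measure.pi.sigmaFinite _

section Measure

variable {V : Type*} [Fintype V]

theorem lintegral_pi_prod {μ : V → Measure R4} [∀ i, SigmaFinite (μ i)]
    {f : V → R4 → ℝ≥0∞} (hf : ∀ i, Measurable (f i)) :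
    ∫⁻ x, ∏ i, f i (x i) ∂Measure.pi μ = ∏ i, ∫⁻ t, f i t ∂μ i := by
  have hmeas : Measurable fun y : V → R4 => ∏ i, f i (y i) :=
    Finset.measurable_prod _ fun i _ => (hf i).comp (measurable_pi_apply i)
  have key : ∀ (s : Finset V) (x : V → R4),
      (∫⋯∫⁻_s, (fun y => ∏ i, f i (y i)) ∂μ) x =
        (∏ i ∈ s, ∫⁻ t, f i t ∂μ i) * ∏ i ∈ sᶜ, f i (x i) := by
    intro s
    induction s using Finset.induction_on with
    | empty => intro x; simp
    | insert i s hi ih =>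
      intro x
      rw [lmarginal_insert _ hmeas hi]
      simp_rw [ih]
      have hsc : sᶜ = insert i (insert i s)ᶜ := by
        ext j; by_cases hj : j = i <;> simp [hj, hi]
      have hni : i ∉ (insert i s)ᶜ := by simp
      have : ∀ t : R4, (∏ j ∈ sᶜ, f j (Function.update x i t j)) =
          f i t * ∏ j ∈ (insert i s)ᶜ, f j (x j) := by
        intro t
        rw [hsc, Finset.prod_insert hni]
        congr 1
        · simp
        · refine Finset.prod_congr rfl fun j hj => ?_
          rw [Function.update_of_ne]
          rintro rfl; exact hni hj
      simp_rw [this]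
      rw [lintegral_const_mul _ ((hf i).mul_const _), lintegral_mul_const _ (hf i),
        Finset.prod_insert hi]
      ring
  have := key Finset.univ 0
  rw [lintegral_eq_lmarginal_univ (0 : V → R4), this]
  simp

/-- Coordinatewise change of variables: if each `φ i` pushes the measure with density `J i` with
respect to the `i`-th vertex measure forward to the `i`-th target measure, then the joint measures
are related by the product of the densities. -/
theorem lintegral_change_of_variables {P P' : V → Option R4} {φ : V → R4 → R4}
    {J : V → R4 → ℝ≥0∞} (hφ : ∀ i, Measurable (φ i)) (hJ : ∀ i, Measurable (J i))
    (h : ∀ i, ((vertexMeasure (P i)).withDensity (J i)).map (φ i) = vertexMeasure (P' i))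
    {F F' : (V → R4) → ℝ≥0∞} (hF' : Measurable F')
    (hFF' : ∀ᵐ x ∂posMeasure P, F x = (∏ i, J i (x i)) * F' (fun i => φ i (x i))) :
    ∫⁻ x, F x ∂posMeasure P = ∫⁻ x, F' x ∂posMeasure P' := by
  have hprod : Measurable fun x : V → R4 => ∏ i, J i (x i) :=
    Finset.measurable_prod _ fun i _ => (hJ i).comp (measurable_pi_apply i)
  have hΦ : Measurable fun (x : V → R4) i => φ i (x i) :=
    measurable_pi_lambda _ fun i => (hφ i).comp (measurable_pi_apply i)
  have hmap : posMeasure P' =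
      ((posMeasure P).withDensity fun x => ∏ i, J i (x i)).map fun x i => φ i (x i) := by
    refine Measure.pi_eq fun s hs => ?_
    rw [Measure.map_apply hΦ (MeasurableSet.univ_pi hs),
      withDensity_apply _ (hΦ (MeasurableSet.univ_pi hs)),
      ← lintegral_indicator (hΦ (MeasurableSet.univ_pi hs))]
    have : ∀ x : V → R4, Set.indicator ((fun (x : V → R4) i => φ i (x i)) ⁻¹' Set.univ.pi s)
        (fun x => ∏ i, J i (x i)) x = ∏ i, Set.indicator (φ i ⁻¹' s i) (J i) (x i) := by
      intro x
      by_cases hx : ∀ i, φ i (x i) ∈ s i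
      · rw [Set.indicator_of_mem (by simpa [Set.mem_pi] using hx)]
        exact Finset.prod_congr rfl fun i _ =>
          (Set.indicator_of_mem (s := φ i ⁻¹' s i) (hx i) (J i)).symm
      · rw [Set.indicator_of_notMem (by simpa [Set.mem_pi] using hx)]
        push Not at hx
        obtain ⟨i, hi⟩ := hx
        exact (Finset.prod_eq_zero (Finset.mem_univ i)
          (Set.indicator_of_notMem (s := φ i ⁻¹' s i) hi (J i))).symm
    simp_rw [this]
    rw [posMeasure, lintegral_pi_prod fun i => (hJ i).indicator (hφ i (hs i))]
    refine Finset.prod_congr rfl fun i _ => ?_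
    rw [← h i, Measure.map_apply (hφ i) (hs i), withDensity_apply _ (hφ i (hs i)),
      lintegral_indicator (hφ i (hs i))]
  rw [hmap, lintegral_map hF' hΦ]
  refine (lintegral_congr_ae hFF').trans ?_
  exact (lintegral_withDensity_eq_lintegral_mul _ hprod (hF'.comp hΦ)).symm

/-- Tonelli's theorem: a free vertex `v` is integrated last. -/
theorem lintegral_posMeasure_fix {P : V → Option R4} {v : V} (hv : P v = none)
    {F : (V → R4) → ℝ≥0∞} (hF : Measurable F) :
    ∫⁻ x, F x ∂posMeasure P =
      ∫⁻ t, ∫⁻ x, F x ∂posMeasure (Function.update P v (some t)) := by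
  set P₀ := Function.update P v (some (0 : R4)) with hP₀
  have hupd : Measurable fun p : R4 × (V → R4) => Function.update p.2 v p.1 := by
    refine measurable_pi_lambda _ fun i => ?_
    by_cases hi : i = v
    · subst hi; simpa using measurable_fst
    · simp only [Function.update_of_ne hi]
      exact (measurable_pi_apply i).comp measurable_snd
  have h1 : posMeasure P =
      ((volume : Measure R4).prod (posMeasure P₀)).map
        fun p : R4 × (V → R4) => Function.update p.2 v p.1 := by
    refine Measure.pi_eq fun s hs => ?_
    rw [Measure.map_apply hupd (MeasurableSet.univ_pi hs)]
    have : (fun p : R4 × (V → R4) => Function.update p.2 v p.1) ⁻¹' Set.univ.pi s =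
        s v ×ˢ Set.univ.pi (Function.update s v Set.univ) := by
      ext ⟨t, x⟩
      simp only [Set.mem_preimage, Set.mem_pi, Set.mem_univ, forall_const, Set.mem_prod]
      constructor
      · intro hx
        refine ⟨by simpa using hx v, fun i => ?_⟩
        by_cases hi : i = v
        · subst hi; simp
        · simpa [Function.update_of_ne hi] using hx i
      · rintro ⟨h0, hx⟩ i
        by_cases hi : i = v
        · subst hi; simpa using h0
        · simpa [Function.update_of_ne hi] using hx i
    rw [this, Measure.prod_prod, posMeasure, Measure.pi_pi,
      ← Finset.mul_prod_erase _ _ (Finset.mem_univ v),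
      ← Finset.mul_prod_erase Finset.univ (fun i => vertexMeasure (P i) (s i)) (Finset.mem_univ v)]
    have e1 : vertexMeasure (P₀ v) (Function.update s v Set.univ v) = 1 := by
      simp [hP₀, vertexMeasure]
    rw [e1, one_mul, hv]
    congr 1
    refine Finset.prod_congr rfl fun i hi => ?_
    simp [hP₀, Function.update_of_ne (Finset.ne_of_mem_erase hi)]
  rw [h1, lintegral_map hF hupd]
  refine (lintegral_prod _ (hF.comp hupd).aemeasurable).trans ?_
  refine lintegral_congr fun t => ?_
  refine lintegral_change_of_variables (φ := fun i => if i = v then fun _ => t else id)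
    (J := fun _ _ => 1) (fun i => ?_) (fun i => measurable_const) (fun i => ?_) hF
    (Filter.Eventually.of_forall fun x => ?_)
  · split_ifs <;> fun_prop
  · simp only [withDensity_const, one_smul]
    by_cases hi : i = v
    · subst hi
      simp [hP₀, vertexMeasure]
    · simp [hi, hP₀]
  · simp only [Finset.prod_const_one, one_mul]
    refine congrArg F (funext fun i => ?_)
    by_cases hi : i = v
    · subst hi; simp
    · simp [hi]

/-- The gauge in which `w` sits at `0` and `z` at `e`. The vertex `u` is thought of as the point at
infinity; its recorded position `0` never enters the integrand. -/
noncomputable def gaugePos (u w z : V) (e : R4) (v : V) : Option R4 :=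
  if v = w then some 0 else if v = z then some e else if v = u then some 0 else none

/-- The domain of integration in the definition of the period, seen as a measure on the positions
of all vertices. -/
theorem map_extendPos (u w z : V) (e : R4) (hwz : w ≠ z) (huw : u ≠ w) (huz : u ≠ z) :
    Measurable (extendPos u w z e) ∧
    (volume : Measure ({v : V // v ≠ u ∧ v ≠ w ∧ v ≠ z} → R4)).map (extendPos u w z e) =
      posMeasure (gaugePos u w z e) := by
  have hm : Measurable (extendPos u w z e) := by
    refine measurable_pi_lambda _ fun i => ?_
    unfold extendPos
    split_ifs
    · exact measurable_const
    · exact measurable_const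
    · exact measurable_pi_apply _
    · exact measurable_const
  refine ⟨hm, (Measure.pi_eq fun s hs => ?_).symm⟩
  rw [Measure.map_apply hm (MeasurableSet.univ_pi hs)]
  have hsplit : ∏ i, vertexMeasure (gaugePos u w z e i) (s i) =
      (∏ i ∈ Finset.univ.filter fun v => v ≠ u ∧ v ≠ w ∧ v ≠ z, volume (s i)) *
      ∏ i ∈ Finset.univ.filter fun v => ¬ (v ≠ u ∧ v ≠ w ∧ v ≠ z),
        vertexMeasure (gaugePos u w z e i) (s i) := by
    rw [← Finset.prod_filter_mul_prod_filter_not Finset.univ fun v => v ≠ u ∧ v ≠ w ∧ v ≠ z]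
    congr 1
    refine Finset.prod_congr rfl fun i hi => ?_
    simp only [Finset.mem_filter, Finset.mem_univ, true_and] at hi
    simp [gaugePos, hi.1, hi.2.1, hi.2.2, vertexMeasure]
  have hfix : (Finset.univ.filter fun v => ¬ (v ≠ u ∧ v ≠ w ∧ v ≠ z)) = {u, w, z} := by
    ext i; simp; tauto
  have hval : ∏ i ∈ Finset.univ.filter fun v => ¬ (v ≠ u ∧ v ≠ w ∧ v ≠ z),
        vertexMeasure (gaugePos u w z e i) (s i) =
      (if (0 : R4) ∈ s u ∧ (0 : R4) ∈ s w ∧ e ∈ s z then 1 else 0) := by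
    rw [hfix, Finset.prod_insert (by simp [huw, huz]), Finset.prod_insert (by simp [hwz])]
    simp only [Finset.prod_singleton, gaugePos, huw, huz, hwz.symm, if_true, if_false,
      vertexMeasure, Measure.dirac_apply' _ (hs _), Set.indicator_apply]
    split_ifs <;> simp_all
  have hpre : extendPos u w z e ⁻¹' Set.univ.pi s =
      if (0 : R4) ∈ s u ∧ (0 : R4) ∈ s w ∧ e ∈ s z then
        Set.univ.pi (fun i : {v : V // v ≠ u ∧ v ≠ w ∧ v ≠ z} => s i) else ∅ := by
    ext x
    simp only [Set.mem_preimage, Set.mem_pi, Set.mem_univ, forall_const]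
    have hxu : extendPos u w z e x u = 0 := by simp [extendPos, huw, huz]
    have hxw : extendPos u w z e x w = 0 := by simp [extendPos]
    have hxz : extendPos u w z e x z = e := by simp [extendPos, hwz.symm]
    have hxv : ∀ (v : V) (h : v ≠ u ∧ v ≠ w ∧ v ≠ z), extendPos u w z e x v = x ⟨v, h⟩ := by
      intro v h; simp [extendPos, h.1, h.2.1, h.2.2]
    split_ifs with hc
    · simp only [Set.mem_pi, Set.mem_univ, forall_const]
      constructor
      · rintro hx ⟨v, hv⟩
        simpa [hxv v hv] using hx v
      · intro hx v
        by_cases hv : v ≠ u ∧ v ≠ w ∧ v ≠ z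
        · rw [hxv v hv]; exact hx ⟨v, hv⟩
        · have : v = u ∨ v = w ∨ v = z := by tauto
          rcases this with rfl | rfl | rfl
          · rw [hxu]; exact hc.1
          · rw [hxw]; exact hc.2.1
          · rw [hxz]; exact hc.2.2
    · simp only [Set.mem_empty_iff_false, iff_false]
      intro hx
      exact hc ⟨hxu ▸ hx u, hxw ▸ hx w, hxz ▸ hx z⟩
  rw [hsplit, hval, hpre]
  split_ifs
  · rw [volume_pi_pi, mul_one]
    exact (Finset.prod_subtype _ (by simp) (fun i => volume (s i))).symm
  · simp

end Measure

/-! ### Edge weights and the period as a Lebesgue integral -/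

section Weights

variable {V : Type*} [Fintype V]

/-- The propagator of an edge, with vertex `u` at infinity: edges at `u` have weight 1. -/
noncomputable def edgeWeight {W : Type*} (u : W) (x : W → R4) : Sym2 W → ℝ :=
  Sym2.lift ⟨fun i j => if i = u ∨ j = u then 1 else (‖x i - x j‖ ^ 2)⁻¹,
    fun i j => by simp [norm_sub_rev, or_comm]⟩

theorem edgeWeight_mk {W : Type*} (u : W) (x : W → R4) (i j : W) :
    edgeWeight u x s(i, j) = if i = u ∨ j = u then 1 else (‖x i - x j‖ ^ 2)⁻¹ := rfl

theorem edgeWeight_nonneg {W : Type*} (u : W) (x : W → R4) (ed : Sym2 W) :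
    0 ≤ edgeWeight u x ed := by
  induction ed with | _ i j
  rw [edgeWeight_mk]
  split_ifs <;> positivity

theorem measurable_edgeWeight {W : Type*} (u : W) (ed : Sym2 W) :
    Measurable fun x : W → R4 => edgeWeight u x ed := by
  induction ed with | _ i j
  simp only [edgeWeight_mk]
  split_ifs <;> fun_prop

/-- The integrand of the period, as a function of the positions of all vertices. -/
noncomputable def totalWeight (G : SimpleGraph V) (u : V) (x : V → R4) : ℝ :=
  ∏ ed ∈ G.edgeFinset, edgeWeight u x ed

theorem totalWeight_nonneg (G : SimpleGraph V) (u : V) (x : V → R4) : 0 ≤ totalWeight G u x :=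
  Finset.prod_nonneg fun _ _ => edgeWeight_nonneg _ _ _

theorem measurable_totalWeight (G : SimpleGraph V) (u : V) :
    Measurable fun x : V → R4 => totalWeight G u x :=
  Finset.measurable_prod _ fun ed _ => measurable_edgeWeight u ed

/-- The position space integral of the period with values in `[0, ∞]`. -/
noncomputable def periodLIntegral (G : SimpleGraph V) (u w z : V) (e : R4) : ℝ≥0∞ :=
  ∫⁻ x, ENNReal.ofReal (totalWeight G u x) ∂posMeasure (gaugePos u w z e)

theorem positionIntegral_eq (G : SimpleGraph V) {u w z : V} (e : R4)
    (huw : u ≠ w) (huz : u ≠ z) (hwz : w ≠ z) :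
    positionIntegral G u w z e = (periodLIntegral G u w z e).toReal := by
  obtain ⟨hm, hmap⟩ := map_extendPos u w z e hwz huw huz
  have hintegrand : ∀ x, periodIntegrand G u w z e x = totalWeight G u (extendPos u w z e x) := by
    intro x
    unfold periodIntegrand totalWeight
    rw [Finset.prod_filter]
    refine Finset.prod_congr rfl fun ed _ => ?_
    induction ed with | _ i j
    rw [edgeWeight_mk]
    by_cases h : i = u ∨ j = u
    · rw [if_pos h, if_neg]
      simp only [Sym2.mem_iff, not_not]
      tauto
    · rw [if_neg h, if_pos]
      · rfl
      · simp only [Sym2.mem_iff]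
        tauto
  unfold positionIntegral periodLIntegral
  simp_rw [hintegrand]
  have hmt := (measurable_totalWeight G u).comp hm
  rw [integral_eq_lintegral_of_nonneg_ae
    (Filter.Eventually.of_forall fun x => totalWeight_nonneg _ _ _)
    hmt.aestronglyMeasurable, ← hmap,
    lintegral_map (measurable_totalWeight G u).ennreal_ofReal hm]

/-- The product of a vertex function over the two endpoints of an edge. -/
@[to_additive]
def endpointProd {W M : Type*} [CommMonoid M] (ψ : W → M) : Sym2 W → M :=
  Sym2.lift ⟨fun i j => ψ i * ψ j, fun _ _ => mul_comm _ _⟩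

@[to_additive]
theorem endpointProd_mk {W M : Type*} [CommMonoid M] (ψ : W → M) (i j : W) :
    endpointProd ψ s(i, j) = ψ i * ψ j := rfl

/-- Each vertex factor occurs once for every incident edge. -/
@[to_additive]
theorem prod_endpointProd {M : Type*} [CommMonoid M] (G : SimpleGraph V) (ψ : V → M) :
    ∏ ed ∈ G.edgeFinset, endpointProd ψ ed =
      ∏ i, ψ i ^ G.degree i := by
  have h1 : ∀ ed ∈ G.edgeFinset,
      endpointProd ψ ed =
        ∏ i, if i ∈ ed then ψ i else 1 := by
    intro ed hed
    induction ed with | _ i j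
    have hij : i ≠ j := G.ne_of_adj (by simpa using hed)
    rw [← Finset.prod_filter]
    have : (Finset.univ.filter fun k => k ∈ s(i, j)) = {i, j} := by
      ext k; simp
    rw [this, Finset.prod_pair hij]
    rfl
  rw [Finset.prod_congr rfl h1, Finset.prod_comm]
  refine Finset.prod_congr rfl fun i _ => ?_
  rw [← Finset.prod_filter, Finset.prod_const, ← SimpleGraph.card_incidenceFinset_eq_degree]
  congr 2
  ext ed
  simp [SimpleGraph.mem_incidenceFinset, SimpleGraph.incidenceSet]

end Weights

/-! ### Conformal maps -/

section Conformal

theorem measurable_inversion (r : ℝ) : Measurable (EuclideanGeometry.inversion (0 : R4) r) := by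
  unfold EuclideanGeometry.inversion
  simp only [vsub_eq_sub, vadd_eq_add, sub_zero, add_zero]
  fun_prop

/-- The Jacobian of the inversion in the sphere of radius `r` is `(r² / ‖y‖²)⁴`. -/
theorem map_inversion {r : ℝ} (hr : 0 < r) :
    ((volume : Measure R4).withDensity fun y => ENNReal.ofReal ((r ^ 2 / ‖y‖ ^ 2) ^ 4)).map
      (EuclideanGeometry.inversion 0 r) = volume := by
  set ι : R4 → R4 := EuclideanGeometry.inversion 0 r with hι
  have hmι : Measurable ι := measurable_inversion r
  have hinv : Function.Involutive ι := EuclideanGeometry.inversion_involutive 0 hr.ne'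
  have h0 : ι 0 = 0 := EuclideanGeometry.inversion_self 0 r
  have hae : ∀ A : Set R4, (A ∩ {0}ᶜ : Set R4) =ᵐ[volume] A := by
    intro A
    have : ∀ᵐ y : R4, y ≠ 0 := by
      rw [ae_iff]; simp
    filter_upwards [this] with y hy
    apply propext
    exact ⟨fun h => h.1, fun h => ⟨h, hy⟩⟩
  ext s hs
  have hA : MeasurableSet (ι ⁻¹' s) := hmι hs
  rw [Measure.map_apply hmι hs, withDensity_apply _ hA, ← setLIntegral_congr (hae _)]
  have hderiv : ∀ y ∈ ι ⁻¹' s ∩ {0}ᶜ, HasFDerivWithinAt ι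
      ((r / dist y 0) ^ 2 • (((ℝ ∙ (y - 0))ᗮ.reflection : R4 ≃ₗᵢ[ℝ] R4) : R4 →L[ℝ] R4))
      (ι ⁻¹' s ∩ {0}ᶜ) y := fun y hy =>
    (EuclideanGeometry.hasFDerivAt_inversion (by simpa using hy.2)).hasFDerivWithinAt
  have hj := lintegral_abs_det_fderiv_eq_addHaar_image volume
    (hA.inter (MeasurableSet.singleton 0).compl) hderiv hinv.injective.injOn
  have himg : ι '' (ι ⁻¹' s ∩ {0}ᶜ) = s ∩ {0}ᶜ := by
    ext y
    constructor
    · rintro ⟨x, ⟨hx, hx0⟩, rfl⟩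
      refine ⟨hx, fun h => hx0 ?_⟩
      have : ι (ι x) = ι 0 := congrArg ι h
      rwa [hinv, h0] at this
    · rintro ⟨hy, hy0⟩
      refine ⟨ι y, ⟨by simpa [hinv y] using hy, fun h => hy0 ?_⟩, hinv y⟩
      have : ι (ι y) = ι 0 := congrArg ι h
      rwa [hinv, h0] at this
  rw [himg, measure_congr (hae s)] at hj
  rw [← hj]
  refine setLIntegral_congr_fun (hA.inter (MeasurableSet.singleton 0).compl) fun y hy => ?_
  congr 1
  have hd : ContinuousLinearMap.det
      (((r / dist y 0) ^ 2 • (((ℝ ∙ (y - 0))ᗮ.reflection : R4 ≃ₗᵢ[ℝ] R4) : R4 →L[ℝ] R4))) =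
      ((r / dist y 0) ^ 2) ^ 4 *
        LinearMap.det ((ℝ ∙ (y - 0))ᗮ.reflection.toLinearMap) := by
    rw [ContinuousLinearMap.det, ContinuousLinearMap.toLinearMap_smul, LinearMap.det_smul,
      finrank_euclideanSpace_fin]
    rfl
  rw [hd, Submodule.det_reflection, abs_mul, abs_pow, abs_pow]
  simp [div_pow]

/-- The inversion `y ↦ ‖t‖ y / ‖y‖²` followed by the linear isometry `R`. -/
noncomputable def twistMap (R : R4 ≃ₗᵢ[ℝ] R4) (t y : R4) : R4 :=
  R (EuclideanGeometry.inversion 0 √‖t‖ y)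

/-- The conformal factor of `twistMap R t` at `y`. -/
noncomputable def twistFactor (t y : R4) : ℝ := ‖t‖ / ‖y‖ ^ 2

theorem measurable_twistMap (R : R4 ≃ₗᵢ[ℝ] R4) (t : R4) : Measurable (twistMap R t) :=
  R.continuous.measurable.comp (measurable_inversion _)

theorem measurable_twistFactor (t : R4) : Measurable (twistFactor t) := by
  unfold twistFactor; fun_prop

theorem twistFactor_pos {t y : R4} (ht : t ≠ 0) (hy : y ≠ 0) : 0 < twistFactor t y := by
  have := norm_pos_iff.2 ht
  have := norm_pos_iff.2 hy
  unfold twistFactor; positivity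

theorem map_twistMap (R : R4 ≃ₗᵢ[ℝ] R4) {t : R4} (ht : t ≠ 0) :
    ((volume : Measure R4).withDensity fun y => ENNReal.ofReal (twistFactor t y ^ 4)).map
      (twistMap R t) = volume := by
  have hr : 0 < √‖t‖ := Real.sqrt_pos.2 (norm_pos_iff.2 ht)
  have h := map_inversion hr
  rw [Real.sq_sqrt (norm_nonneg t)] at h
  have h2 := Measure.map_map (μ := (volume : Measure R4).withDensity
    fun y => ENNReal.ofReal (twistFactor t y ^ 4)) R.continuous.measurable (measurable_inversion √‖t‖)
  refine h2.symm.trans ?_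
  unfold twistFactor
  rw [h]
  exact R.measurePreserving.map_eq

theorem norm_twistMap (R : R4 ≃ₗᵢ[ℝ] R4) (t y : R4) : ‖twistMap R t y‖ = ‖t‖ / ‖y‖ := by
  have h := EuclideanGeometry.dist_inversion_center (0 : R4) y √‖t‖
  rw [Real.sq_sqrt (norm_nonneg t), dist_zero_right, dist_zero_right] at h
  rw [twistMap, R.norm_map, h]

theorem norm_twistMap_sub (R : R4 ≃ₗᵢ[ℝ] R4) (t : R4) {y y' : R4} (hy : y ≠ 0) (hy' : y' ≠ 0) :
    ‖twistMap R t y - twistMap R t y'‖ ^ 2 =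
      twistFactor t y * twistFactor t y' * ‖y - y'‖ ^ 2 := by
  have h := EuclideanGeometry.dist_inversion_inversion hy hy' √‖t‖
  rw [Real.sq_sqrt (norm_nonneg t), dist_zero_right, dist_zero_right, dist_eq_norm,
    dist_eq_norm] at h
  rw [twistMap, twistMap, ← map_sub, R.norm_map, h]
  unfold twistFactor
  ring

theorem twistMap_left {R : R4 ≃ₗᵢ[ℝ] R4} {t e : R4} (he : ‖e‖ = 1) (ht : t ≠ 0)
    (hR : R e = ‖t‖⁻¹ • t) : twistMap R t e = t := by
  have := norm_ne_zero_iff.2 ht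
  simp [twistMap, EuclideanGeometry.inversion, he, hR, smul_smul, this]

theorem twistMap_right {R : R4 ≃ₗᵢ[ℝ] R4} {t e : R4} (ht : t ≠ 0)
    (hR : R (‖t‖⁻¹ • t) = e) : twistMap R t t = e := by
  have := norm_ne_zero_iff.2 ht
  rw [twistMap, ← hR]
  congr 1
  simp only [EuclideanGeometry.inversion, vsub_eq_sub, vadd_eq_add, sub_zero, add_zero,
    dist_zero_right, div_pow, Real.sq_sqrt (norm_nonneg t)]
  congr 1
  field_simp

/-- Two vectors of the same length are exchanged by a reflection. -/
theorem exists_isometry_swap {p q : R4} (h : ‖p‖ = ‖q‖) :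
    ∃ R : R4 ≃ₗᵢ[ℝ] R4, R p = q ∧ R q = p := by
  have h1 : (ℝ ∙ (p - q))ᗮ.reflection p = q := Submodule.reflection_sub h
  have h2 := Submodule.reflection_reflection (ℝ ∙ (p - q))ᗮ p
  rw [h1] at h2
  exact ⟨_, h1, h2⟩

end Conformal
/-! ### Independence of the period of the gauge -/

section Independence

/-- Conformal covariance of the propagators: the map `twistMap` takes the configuration `X`, with
`a` at infinity and `b` at `0`, to the configuration `Y`, with `a` at `0` and `b` at infinity. The
numbers `lam` are the conformal factors, with the appropriate limiting values at `a` and `b`. -/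
theorem edgeWeight_twist {V : Type*} {X Y : V → R4} {lam : V → ℝ} {a b : V} {t : R4}
    (R : R4 ≃ₗᵢ[ℝ] R4) (ht : t ≠ 0) (hab : a ≠ b) (hXb : X b = 0) (hYa : Y a = 0)
    (hla : lam a = ‖t‖) (hlb : lam b = ‖t‖⁻¹) {S : Set V}
    (hS : ∀ i ∈ S, i ≠ a → i ≠ b →
      X i ≠ 0 ∧ Y i = twistMap R t (X i) ∧ lam i = twistFactor t (X i))
    {i j : V} (hi : i ∈ S) (hj : j ∈ S) (hij : i ≠ j) :
    edgeWeight b Y s(i, j) = (lam i)⁻¹ * (lam j)⁻¹ * edgeWeight a X s(i, j) := by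
  have htn : ‖t‖ ≠ 0 := norm_ne_zero_iff.2 ht
  -- An edge from `a` or `b` to a vertex at a finite nonzero position.
  have half : ∀ k ∈ S, k ≠ a → k ≠ b →
      edgeWeight b Y s(a, k) = (lam a)⁻¹ * (lam k)⁻¹ * edgeWeight a X s(a, k) ∧
      edgeWeight b Y s(b, k) = (lam b)⁻¹ * (lam k)⁻¹ * edgeWeight a X s(b, k) := by
    intro k hk hka hkb
    obtain ⟨hX, hY, hl⟩ := hS k hk hka hkb
    have hXn : ‖X k‖ ≠ 0 := norm_ne_zero_iff.2 hX
    constructor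
    · simp only [edgeWeight_mk, hab, hkb, or_self, if_false, true_or, if_true, hYa, zero_sub,
        norm_neg, hY, norm_twistMap, hla, hl, twistFactor]
      field_simp
    · simp only [edgeWeight_mk, hab.symm, hka, or_self, if_false, true_or, if_true, hXb, zero_sub,
        norm_neg, hlb, hl, twistFactor]
      field_simp
  have hpair : edgeWeight b Y s(a, b) = (lam a)⁻¹ * (lam b)⁻¹ * edgeWeight a X s(a, b) := by
    simp only [edgeWeight_mk, or_true, true_or, if_true, hla, hlb]
    field_simp
  have symm : ∀ k l, edgeWeight b Y s(k, l) = (lam k)⁻¹ * (lam l)⁻¹ * edgeWeight a X s(k, l) →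
      edgeWeight b Y s(l, k) = (lam l)⁻¹ * (lam k)⁻¹ * edgeWeight a X s(l, k) := by
    intro k l h
    rw [Sym2.eq_swap, h, mul_comm (lam l)⁻¹]
  by_cases hia : i = a
  · subst hia
    by_cases hjb : j = b
    · subst hjb; exact hpair
    · exact (half j hj hij.symm hjb).1
  by_cases hib : i = b
  · subst hib
    by_cases hja : j = a
    · subst hja; exact symm _ _ hpair
    · exact (half j hj hja hij.symm).2
  by_cases hja : j = a
  · subst hja; exact symm _ _ (half i hi hia hib).1
  by_cases hjb : j = b
  · subst hjb; exact symm _ _ (half i hi hia hib).2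
  obtain ⟨hXi, hYi, hli⟩ := hS i hi hia hib
  obtain ⟨hXj, hYj, hlj⟩ := hS j hj hja hjb
  simp only [edgeWeight_mk, hia, hja, hib, hjb, or_self, if_false, hYi, hYj, hli, hlj,
    norm_twistMap_sub R t hXi hXj, mul_inv]

variable {V : Type*} [Fintype V]

theorem prod_eq_prod_of_off_four {M : Type*} [CommMonoid M] {f g : V → M} {a b c d : V}
    (hab : a ≠ b) (hac : a ≠ c) (had : a ≠ d) (hbc : b ≠ c) (hbd : b ≠ d) (hcd : c ≠ d)
    (hQ : f a * f b * f c * f d = g a * g b * g c * g d)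
    (h : ∀ i, i ≠ a → i ≠ b → i ≠ c → i ≠ d → f i = g i) : ∏ i, f i = ∏ i, g i := by
  have split : ∀ k : V → M, ∏ i, k i =
      (k a * k b * k c * k d) * ∏ i ∈ ({a, b, c, d} : Finset V)ᶜ, k i := by
    intro k
    rw [← Finset.prod_mul_prod_compl ({a, b, c, d} : Finset V)]
    congr 1
    rw [Finset.prod_insert (by simp [hab, hac, had]), Finset.prod_insert (by simp [hbc, hbd]),
      Finset.prod_pair hcd]
    simp only [mul_assoc]
  rw [split f, split g, hQ]
  congr 1
  refine Finset.prod_congr rfl fun i hi => ?_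
  simp only [Finset.mem_compl, Finset.mem_insert, Finset.mem_singleton, not_or] at hi
  exact h i hi.1 hi.2.1 hi.2.2.1 hi.2.2.2

theorem ae_ne_zero : ∀ᵐ y : R4, y ≠ 0 := by
  rw [ae_iff]; simp

theorem ae_posMeasure (P : V → Option R4) : ∀ᵐ x ∂posMeasure P, ∀ i,
    (∀ q, P i = some q → x i = q) ∧ (P i = none → x i ≠ 0) := by
  rw [ae_all_iff]
  intro i
  have h : ∀ᵐ y ∂vertexMeasure (P i), (∀ q, P i = some q → y = q) ∧ (P i = none → y ≠ 0) := by
    cases hP : P i with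
    | none => simpa [vertexMeasure] using ae_ne_zero
    | some q =>
      simp [vertexMeasure]
  exact (Measure.tendsto_eval_ae_ae (μ := fun i => vertexMeasure (P i)) (i := i)).eventually h

/-- Change of variables in which the conformal map `twistMap R t` is applied to the integrated
vertices in `S` and the measure preserving maps `ψ i` to the others. -/
theorem lintegral_twist {P P' : V → Option R4} {t : R4} (R : R4 ≃ₗᵢ[ℝ] R4) (ht : t ≠ 0)
    {S : Finset V} (hS : ∀ i ∈ S, P i = none ∧ P' i = none) {ψ : V → R4 → R4}
    (hψ : ∀ i, Measurable (ψ i))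
    (hψP : ∀ i ∉ S, (vertexMeasure (P i)).map (ψ i) = vertexMeasure (P' i))
    {F F' : (V → R4) → ℝ} (hF' : Measurable F')
    (hFF' : ∀ᵐ x ∂posMeasure P, F x = (∏ i, if i ∈ S then twistFactor t (x i) ^ 4 else 1) *
      F' (fun i => if i ∈ S then twistMap R t (x i) else ψ i (x i))) :
    ∫⁻ x, ENNReal.ofReal (F x) ∂posMeasure P = ∫⁻ x, ENNReal.ofReal (F' x) ∂posMeasure P' := by
  refine lintegral_change_of_variables (φ := fun i => if i ∈ S then twistMap R t else ψ i)
    (J := fun i y => ENNReal.ofReal (if i ∈ S then twistFactor t y ^ 4 else 1))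
    (fun i => ?_) (fun i => ?_) (fun i => ?_) hF'.ennreal_ofReal ?_
  · split_ifs
    · exact measurable_twistMap R t
    · exact hψ i
  · split_ifs
    · exact ((measurable_twistFactor t).pow_const 4).ennreal_ofReal
    · exact measurable_const
  · by_cases hi : i ∈ S
    · simp only [hi, if_true, hS i hi, vertexMeasure]
      exact map_twistMap R ht
    · simp only [hi, if_false, ENNReal.ofReal_one, withDensity_const, one_smul]
      exact hψP i hi
  · filter_upwards [hFF'] with x hx
    have hnn : ∀ i ∈ Finset.univ, 0 ≤ if i ∈ S then twistFactor t (x i) ^ 4 else 1 := by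
      intro i _
      split_ifs <;> positivity
    rw [hx, ENNReal.ofReal_mul (Finset.prod_nonneg hnn), ENNReal.ofReal_prod_of_nonneg hnn]
    congr 3
    ext1 i
    split_ifs <;> rfl

/-- The conformal map exchanging `(∞, 0, e, t)` with `(0, ∞, t, e)`, applied to all vertices,
exchanges the roles of `a`, `b` and of `c`, `d` in the gauge. -/
theorem periodLIntegral_swap {G : SimpleGraph V} (hreg : ∀ v, G.degree v = 4) {a b c d : V}
    (hab : a ≠ b) (hac : a ≠ c) (had : a ≠ d) (hbc : b ≠ c) (hbd : b ≠ d) (hcd : c ≠ d)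
    {e : R4} (he : ‖e‖ = 1) :
    periodLIntegral G a b c e = periodLIntegral G b a d e := by
  unfold periodLIntegral
  rw [lintegral_posMeasure_fix (v := d) (by simp [gaugePos, had.symm, hbd.symm, hcd.symm])
      (measurable_totalWeight G a).ennreal_ofReal,
    lintegral_posMeasure_fix (v := c) (by simp [gaugePos, hac.symm, hbc.symm, hcd])
      (measurable_totalWeight G b).ennreal_ofReal]
  refine lintegral_congr_ae ?_
  filter_upwards [ae_ne_zero] with t ht
  have htn : ‖t‖ ≠ 0 := norm_ne_zero_iff.2 ht
  obtain ⟨R, hR1, hR2⟩ := exists_isometry_swap (p := e) (q := ‖t‖⁻¹ • t)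
    (by rw [norm_smul, norm_inv, norm_norm, inv_mul_cancel₀ htn, he])
  have hPc : (Function.update (gaugePos a b c e) d (some t)) c = some e := by
    simp [gaugePos, hbc.symm, hcd]
  have hPd : (Function.update (gaugePos a b c e) d (some t)) d = some t := by simp
  have hPa : (Function.update (gaugePos a b c e) d (some t)) a = some 0 := by
    simp [gaugePos, hab, hac, had]
  have hPb : (Function.update (gaugePos a b c e) d (some t)) b = some 0 := by
    simp [gaugePos, hbd]
  have hPi : ∀ i, i ≠ a → i ≠ b → i ≠ c → i ≠ d →
      (Function.update (gaugePos a b c e) d (some t)) i = none := by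
    intro i h1 h2 h3 h4; simp [gaugePos, h1, h2, h3, h4]
  have hmem : ∀ i, i ∈ ({a, b, c, d} : Finset V)ᶜ ↔ i ≠ a ∧ i ≠ b ∧ i ≠ c ∧ i ≠ d := by
    intro i; simp
  refine lintegral_twist R ht (S := ({a, b, c, d} : Finset V)ᶜ)
    (ψ := fun i => if i = a ∨ i = b then id else twistMap R t) (fun i hi => ?_) (fun i => ?_)
    (fun i hi => ?_) (measurable_totalWeight G b) ?_
  · obtain ⟨h1, h2, h3, h4⟩ := (hmem i).1 hi
    simp [gaugePos, h1, h2, h3, h4]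
  · split_ifs
    · exact measurable_id
    · exact measurable_twistMap R t
  · have : i = a ∨ i = b ∨ i = c ∨ i = d := by
      rw [hmem] at hi; tauto
    rcases this with rfl | rfl | rfl | rfl
    · rw [hPa]
      simp [gaugePos, hac]
    · rw [hPb]
      simp [gaugePos, hab.symm, hbc, hbd]
    · rw [hPc]
      simp [hac.symm, hbc.symm, vertexMeasure,
        Measure.map_dirac' (measurable_twistMap R t), twistMap_left he ht hR1]
    · rw [hPd]
      simp [had.symm, hbd.symm, hcd.symm, vertexMeasure, gaugePos,
        Measure.map_dirac' (measurable_twistMap R t), twistMap_right ht hR2]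
  · filter_upwards [ae_posMeasure (Function.update (gaugePos a b c e) d (some t))] with x hx
    have hxa := (hx a).1 _ hPa
    have hxb := (hx b).1 _ hPb
    have hxc := (hx c).1 _ hPc
    have hxd := (hx d).1 _ hPd
    have hxi := fun i h1 h2 h3 h4 => (hx i).2 (hPi i h1 h2 h3 h4)
    set Y : V → R4 := fun i => if i ∈ ({a, b, c, d} : Finset V)ᶜ then twistMap R t (x i)
      else (if i = a ∨ i = b then id else twistMap R t) (x i) with hY
    set lam : V → ℝ := fun i => if i = a then ‖t‖ else if i = b then ‖t‖⁻¹ else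
      twistFactor t (x i) with hlam
    have he0 : e ≠ 0 := by
      rintro rfl; simp at he
    have hx0 : ∀ i, i ≠ a → i ≠ b → x i ≠ 0 := by
      intro i h1 h2
      by_cases h3 : i = c
      · rw [h3, hxc]; exact he0
      by_cases h4 : i = d
      · rw [h4, hxd]; exact ht
      exact hxi i h1 h2 h3 h4
    have hYi : ∀ i, i ≠ a → i ≠ b → Y i = twistMap R t (x i) := by
      intro i h1 h2
      simp [hY, h1, h2]
    have hlami : ∀ i, i ≠ a → i ≠ b → lam i = twistFactor t (x i) := by
      intro i h1 h2
      simp [hlam, h1, h2]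
    have hprod : totalWeight G b Y = (∏ i, (lam i)⁻¹ ^ 4) * totalWeight G a x := by
      have h4 : ∏ i, (lam i)⁻¹ ^ 4 = ∏ ed ∈ G.edgeFinset, endpointProd (fun i => (lam i)⁻¹) ed := by
        rw [prod_endpointProd]
        simp [hreg]
      rw [h4, totalWeight, totalWeight, ← Finset.prod_mul_distrib]
      refine Finset.prod_congr rfl fun ed hed => ?_
      induction ed with | _ i j
      have hij : i ≠ j := G.ne_of_adj (by simpa using hed)
      rw [endpointProd_mk]
      exact edgeWeight_twist (S := Set.univ) R ht hab hxb (by simp [hY, hxa]) (by simp [hlam])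
        (by simp [hlam, hab.symm]) (fun i _ h1 h2 => ⟨hx0 i h1 h2, hYi i h1 h2, hlami i h1 h2⟩)
        (Set.mem_univ i) (Set.mem_univ j) hij
    have hcancel : (∏ i, if i ∈ ({a, b, c, d} : Finset V)ᶜ then twistFactor t (x i) ^ 4 else 1) =
        ∏ i, lam i ^ 4 := by
      refine prod_eq_prod_of_off_four hab hac had hbc hbd hcd ?_ fun i h1 h2 h3 h4 => ?_
      · simp only [hmem, ne_eq, not_true, false_and, and_false, if_false, hlami c hac.symm hbc.symm,
          hlami d had.symm hbd.symm, hxc, hxd, twistFactor, he]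
        simp only [hlam, hab.symm, if_true, if_false]
        field_simp
      · rw [if_pos ((hmem i).2 ⟨h1, h2, h3, h4⟩), hlami i h1 h2]
    rw [hprod, hcancel, ← mul_assoc, ← Finset.prod_mul_distrib]
    have hlam0 : ∀ i, lam i ≠ 0 := by
      intro i
      by_cases h1 : i = a
      · simpa [hlam, h1] using ht
      by_cases h2 : i = b
      · simpa [hlam, h2, hab.symm] using ht
      · rw [hlami i h1 h2]; exact (twistFactor_pos ht (hx0 i h1 h2)).ne'
    rw [Finset.prod_eq_one, one_mul]
    intro i _
    rw [← mul_pow, mul_inv_cancel₀ (hlam0 i), one_pow]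

/-- Applying a measure preserving isometry `σ` to all vertices other than the one at infinity. -/
theorem lintegral_isometry {G : SimpleGraph V} {u : V} {P P' : V → Option R4} {σ : R4 → R4}
    (hσ : MeasurePreserving σ) (hiso : ∀ x y, ‖σ x - σ y‖ = ‖x - y‖) (hu : P u = P' u)
    (hP : ∀ i, i ≠ u → P' i = (P i).map σ) :
    ∫⁻ x, ENNReal.ofReal (totalWeight G u x) ∂posMeasure P =
      ∫⁻ x, ENNReal.ofReal (totalWeight G u x) ∂posMeasure P' := by
  refine lintegral_change_of_variables (φ := fun i => if i = u then id else σ)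
    (J := fun _ _ => 1) (fun i => ?_) (fun i => measurable_const) (fun i => ?_)
    (measurable_totalWeight G u).ennreal_ofReal (Filter.Eventually.of_forall fun x => ?_)
  · split_ifs
    · exact measurable_id
    · exact hσ.measurable
  · simp only [withDensity_const, one_smul]
    by_cases hi : i = u
    · simp [hi, hu]
    · simp only [hi, if_false, hP i hi]
      cases P i with
      | none => exact hσ.map_eq
      | some p => exact Measure.map_dirac' hσ.measurable p
  · simp only [Finset.prod_const_one, one_mul]
    refine congrArg ENNReal.ofReal (Finset.prod_congr rfl fun ed _ => ?_)
    induction ed with | _ i j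
    simp only [edgeWeight_mk]
    by_cases h : i = u ∨ j = u
    · simp [h]
    · have hi : i ≠ u := fun h' => h (Or.inl h')
      have hj : j ≠ u := fun h' => h (Or.inr h')
      simp [hi, hj, hiso]

theorem periodLIntegral_unit (G : SimpleGraph V) {u w z : V} (huw : u ≠ w) (huz : u ≠ z)
    {e e' : R4} (h : ‖e‖ = ‖e'‖) :
    periodLIntegral G u w z e = periodLIntegral G u w z e' := by
  obtain ⟨R, hR, -⟩ := exists_isometry_swap h
  refine lintegral_isometry R.measurePreserving (fun x y => ?_) ?_ fun i hi => ?_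
  · rw [← map_sub, R.norm_map]
  · simp [gaugePos, huw, huz]
  · unfold gaugePos
    split_ifs <;> simp [hR]

theorem periodLIntegral_comm (G : SimpleGraph V) {u w z : V} (huw : u ≠ w) (huz : u ≠ z)
    (hwz : w ≠ z) (e : R4) : periodLIntegral G u w z e = periodLIntegral G u z w e := by
  refine lintegral_isometry (σ := fun y => e - y)
    (Measure.measurePreserving_sub_left volume e) (fun x y => ?_) ?_ fun i hi => ?_
  · rw [sub_sub_sub_cancel_left, norm_sub_rev]
  · simp [gaugePos, huw, huz]
  · unfold gaugePos
    by_cases h1 : i = w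
    · subst h1; simp [hwz]
    by_cases h2 : i = z
    · subst h2; simp [hwz.symm]
    simp [h1, h2, hi]

theorem periodLIntegral_indep {G : SimpleGraph V} (hreg : ∀ v, G.degree v = 4)
    {u w z u' w' z' : V} (huw : u ≠ w) (huz : u ≠ z) (hwz : w ≠ z)
    (huw' : u' ≠ w') (huz' : u' ≠ z') (hwz' : w' ≠ z') {e e' : R4} (he : ‖e‖ = 1)
    (he' : ‖e'‖ = 1) : periodLIntegral G u w z e = periodLIntegral G u' w' z' e' := by
  have hcard : 4 < Fintype.card V := by
    have := G.degree_lt_card_verts u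
    rwa [hreg] at this
  rw [periodLIntegral_unit G huw' huz' (he'.trans he.symm)]
  have hfresh : ∀ u w z z' : V, ∃ v, u ≠ v ∧ w ≠ v ∧ z ≠ v ∧ z' ≠ v := by
    intro u w z z'
    obtain ⟨v, hv⟩ : ∃ v, v ∉ ({u, w, z, z'} : Finset V) := by
      by_contra! h
      have h1 : Fintype.card V ≤ ({u, w, z, z'} : Finset V).card :=
        Finset.card_le_card fun x _ => h x
      have := Finset.card_le_four (a := u) (b := w) (c := z) (d := z')
      omega
    simp only [Finset.mem_insert, Finset.mem_singleton, not_or] at hv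
    exact ⟨v, Ne.symm hv.1, Ne.symm hv.2.1, Ne.symm hv.2.2.1, Ne.symm hv.2.2.2⟩
  have hA : ∀ u w z z' : V, u ≠ w → u ≠ z → w ≠ z → u ≠ z' → w ≠ z' →
      periodLIntegral G u w z e = periodLIntegral G u w z' e := by
    intro u w z z' huw huz hwz huz' hwz'
    obtain ⟨v, h1, h2, h3, h4⟩ := hfresh u w z z'
    exact (periodLIntegral_swap hreg huw huz h1 hwz h2 h3 he).trans
      (periodLIntegral_swap hreg huw huz' h1 hwz' h2 h4 he).symm
  have hC : ∀ u w z : V, u ≠ w → u ≠ z → w ≠ z →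
      periodLIntegral G u w z e = periodLIntegral G w u z e := by
    intro u w z huw huz hwz
    obtain ⟨v, h1, h2, h3, -⟩ := hfresh u w z z
    exact (periodLIntegral_swap hreg huw huz h1 hwz h2 h3 he).trans
      (hA w u v z huw.symm h2 h1 hwz huz)
  have hB : ∀ u w z w' z' : V, u ≠ w → u ≠ z → w ≠ z → u ≠ w' → u ≠ z' → w' ≠ z' →
      periodLIntegral G u w z e = periodLIntegral G u w' z' e := by
    intro u w z w' z' huw huz hwz huw' huz' hwz'
    by_cases hww : w = w'
    · subst hww; exact hA u w z z' huw huz hwz huz' hwz'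
    · rw [hA u w z w' huw huz hwz huw' hww,
        periodLIntegral_comm G huw huw' hww,
        hA u w' w z' huw' huw (Ne.symm hww) huz' hwz']
  by_cases huu : u = u'
  · subst huu; exact hB _ _ _ _ _ huw huz hwz huw' huz' hwz'
  · obtain ⟨s, hs1, hs2⟩ : ∃ s, u ≠ s ∧ u' ≠ s := by
      by_cases h : u' = w
      · exact ⟨z, huz, h ▸ hwz⟩
      · exact ⟨w, huw, h⟩
    rw [hB u w z u' s huw huz hwz huu hs1 hs2, hC u u' s huu hs1 hs2]
    exact hB _ _ _ _ _ (Ne.symm huu) hs2 hs1 huw' huz' hwz'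

end Independence

/-! ### Edge products under the twist -/

section Twist

/-- The combinatorial hypotheses of the twist: `V₁ ⊔ V₂ ⊔ {a, b, c, d}` is a partition of the
vertices of `G` into disjoint sets with no edge between `V₁` and `V₂`. -/
structure TwistSetup {V : Type*} (G : SimpleGraph V) (V₁ V₂ : Finset V) (a b c d : V) : Prop where
  hab : a ≠ b
  hac : a ≠ c
  had : a ≠ d
  hbc : b ≠ c
  hbd : b ≠ d
  hcd : c ≠ d
  disj : Disjoint V₁ V₂
  notMem_left : a ∉ V₁ ∧ b ∉ V₁ ∧ c ∉ V₁ ∧ d ∉ V₁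
  notMem_right : a ∉ V₂ ∧ b ∉ V₂ ∧ c ∉ V₂ ∧ d ∉ V₂
  cover : ∀ x : V, x ∈ V₁ ∨ x ∈ V₂ ∨ x = a ∨ x = b ∨ x = c ∨ x = d
  sep : ∀ x ∈ V₁, ∀ y ∈ V₂, ¬ G.Adj x y

namespace TwistSetup

variable {V : Type*} {G : SimpleGraph V} {V₁ V₂ : Finset V} {a b c d : V}

theorem perm_a (h : TwistSetup G V₁ V₂ a b c d) : twistPerm a b c d a = b := by
  simp [twistPerm, Equiv.swap_apply_of_ne_of_ne h.hbc h.hbd]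

theorem perm_b (h : TwistSetup G V₁ V₂ a b c d) : twistPerm a b c d b = a := by
  simp [twistPerm, Equiv.swap_apply_of_ne_of_ne h.hac h.had]

theorem perm_c (h : TwistSetup G V₁ V₂ a b c d) : twistPerm a b c d c = d := by
  simp [twistPerm, Equiv.swap_apply_of_ne_of_ne h.hac.symm h.hbc.symm]

theorem perm_d (h : TwistSetup G V₁ V₂ a b c d) : twistPerm a b c d d = c := by
  simp [twistPerm, Equiv.swap_apply_of_ne_of_ne h.had.symm h.hbd.symm]

theorem perm_of_ne {x : V} (ha : x ≠ a) (hb : x ≠ b) (hc : x ≠ c) (hd : x ≠ d) :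
    twistPerm a b c d x = x := by
  simp [twistPerm, Equiv.swap_apply_of_ne_of_ne ha hb, Equiv.swap_apply_of_ne_of_ne hc hd]

theorem ne_of_mem_right (h : TwistSetup G V₁ V₂ a b c d) {x : V} (hx : x ∈ V₂) :
    x ≠ a ∧ x ≠ b ∧ x ≠ c ∧ x ≠ d := by
  obtain ⟨h1, h2, h3, h4⟩ := h.notMem_right
  refine ⟨?_, ?_, ?_, ?_⟩ <;> rintro rfl <;> contradiction

theorem perm_right (h : TwistSetup G V₁ V₂ a b c d) {x : V} (hx : x ∈ V₂) :
    twistPerm a b c d x = x := by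
  obtain ⟨h1, h2, h3, h4⟩ := h.ne_of_mem_right hx
  exact perm_of_ne h1 h2 h3 h4

theorem perm_perm (h : TwistSetup G V₁ V₂ a b c d) (x : V) :
    twistPerm a b c d (twistPerm a b c d x) = x := by
  by_cases ha : x = a
  · rw [ha, h.perm_a, h.perm_b]
  by_cases hb : x = b
  · rw [hb, h.perm_b, h.perm_a]
  by_cases hc : x = c
  · rw [hc, h.perm_c, h.perm_d]
  by_cases hd : x = d
  · rw [hd, h.perm_d, h.perm_c]
  rw [perm_of_ne ha hb hc hd, perm_of_ne ha hb hc hd]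

theorem perm_mem_right (h : TwistSetup G V₁ V₂ a b c d) (x : V) :
    twistPerm a b c d x ∈ V₂ ↔ x ∈ V₂ := by
  constructor
  · intro hx
    have := h.perm_right hx
    rw [h.perm_perm] at this
    rwa [← this] at hx
  · intro hx
    rwa [h.perm_right hx]

/-- A vertex adjacent to `V₂` lies in `V₂` or is one of the four separating vertices. -/
theorem adj_right (h : TwistSetup G V₁ V₂ a b c d) {x y : V} (hx : x ∈ V₂) (hxy : G.Adj x y) :
    y ∈ V₂ ∨ y = a ∨ y = b ∨ y = c ∨ y = d := by
  rcases h.cover y with hy | hy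
  · exact absurd hxy.symm (h.sep y hy x hx)
  · exact hy

theorem twistGraph_adj (h : TwistSetup G V₁ V₂ a b c d) (x y : V) :
    (twistGraph G V₁ V₂ a b c d).Adj x y ↔
      if x ∈ V₂ ∨ y ∈ V₂ then G.Adj (twistPerm a b c d x) (twistPerm a b c d y)
      else G.Adj x y := by
  have hd : ∀ v, v ∈ V₁ → v ∉ V₂ := fun v h1 h2 => Finset.disjoint_left.1 h.disj h1 h2
  have hsep := h.sep
  have key : ∀ x y, x ∈ V₂ ∨ y ∈ V₂ → G.Adj x y → ¬ (x ∈ V₁ ∨ y ∈ V₁ ∨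
      ((x = a ∨ x = b ∨ x = c ∨ x = d) ∧ (y = a ∨ y = b ∨ y = c ∨ y = d))) := by
    intro x y hxy hadj hcon
    have hadj' := hadj.symm
    rcases hxy with hx | hx <;> rcases hcon with h1 | h1 | h1
    · exact hd _ h1 hx
    · exact hsep _ h1 _ hx hadj'
    · have := h.ne_of_mem_right hx; tauto
    · exact hsep _ h1 _ hx hadj
    · exact hd _ h1 hx
    · have := h.ne_of_mem_right hx; tauto
  simp only [twistGraph, SimpleGraph.fromRel_adj]
  split_ifs with hV
  · constructor
    · rintro ⟨-, (⟨h1, h2⟩ | ⟨h1, -⟩) | (⟨h1, h2⟩ | ⟨h1, -⟩)⟩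
      · exact absurd h2 (key _ _ hV h1)
      · exact h1
      · exact absurd h2 (key _ _ hV.symm h1)
      · exact h1.symm
    · intro h1
      exact ⟨fun hxy => h1.ne (by rw [hxy]), Or.inl (Or.inr ⟨h1, hV⟩)⟩
  · have := h.cover x
    have := h.cover y
    constructor
    · rintro ⟨-, (⟨h1, h2⟩ | ⟨h1, h2⟩) | (⟨h1, h2⟩ | ⟨h1, h2⟩)⟩
      · exact h1
      · exact absurd h2 hV
      · exact h1.symm
      · exact absurd h2.symm hV
    · intro h1
      refine ⟨h1.ne, Or.inl (Or.inl ⟨h1, ?_⟩)⟩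
      tauto

/-- The involution of the edge slots that applies `τ` to the edges meeting `V₂` and fixes all
others. It exchanges the edge set of `G` with that of the twisted graph. -/
noncomputable def edgeTwist (V₂ : Finset V) (a b c d : V) (ed : Sym2 V) : Sym2 V :=
  if ∃ x ∈ ed, x ∈ V₂ then ed.map (twistPerm a b c d) else ed

theorem edgeTwist_mk (V₂ : Finset V) (a b c d x y : V) :
    edgeTwist V₂ a b c d s(x, y) = if x ∈ V₂ ∨ y ∈ V₂ then
      s(twistPerm a b c d x, twistPerm a b c d y) else s(x, y) := by
  simp [edgeTwist, Sym2.map_mk]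

theorem edgeTwist_edgeTwist (h : TwistSetup G V₁ V₂ a b c d) (ed : Sym2 V) :
    edgeTwist V₂ a b c d (edgeTwist V₂ a b c d ed) = ed := by
  induction ed with
  | _ x y =>
    by_cases hV : x ∈ V₂ ∨ y ∈ V₂
    · simp only [edgeTwist_mk, hV, if_true, h.perm_mem_right, h.perm_perm]
    · simp only [edgeTwist_mk, hV, if_false]

theorem edgeTwist_mem (h : TwistSetup G V₁ V₂ a b c d) (ed : Sym2 V) :
    edgeTwist V₂ a b c d ed ∈ (twistGraph G V₁ V₂ a b c d).edgeSet ↔ ed ∈ G.edgeSet := by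
  induction ed with
  | _ x y =>
    by_cases hV : x ∈ V₂ ∨ y ∈ V₂
    · simp only [edgeTwist_mk, hV, if_true, SimpleGraph.mem_edgeSet, h.twistGraph_adj,
        h.perm_mem_right, h.perm_perm]
    · simp only [edgeTwist_mk, hV, if_false, SimpleGraph.mem_edgeSet, h.twistGraph_adj]

end TwistSetup

@[to_additive]
theorem SwapOpt.prod_eq {V M : Type*} [CommMonoid M] {E E' : Finset (Sym2 V)} {p q : Sym2 V}
    (h : SwapOpt E p q E') {w : Sym2 V → M} (hw : w p = w q) :
    ∏ ed ∈ E', w ed = ∏ ed ∈ E, w ed := by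
  rcases h with rfl | ⟨hp, hq, rfl⟩ | ⟨hq, hp, rfl⟩
  · rfl
  · rw [Finset.prod_insert (fun hc => hq (Finset.mem_of_mem_erase hc)), ← hw,
      Finset.mul_prod_erase _ _ hp]
  · rw [Finset.prod_insert (fun hc => hp (Finset.mem_of_mem_erase hc)), hw,
      Finset.mul_prod_erase _ _ hq]

variable {V : Type*} [Fintype V] {G Gt : SimpleGraph V} {V₁ V₂ : Finset V} {a b c d : V}

/-- Comparison of edge products before and after the twist: it suffices that the weights agree
along `edgeTwist` and that the weight on the twisted side is insensitive to the two swaps. -/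
@[to_additive]
theorem TwistSetup.prod_eq (h : TwistSetup G V₁ V₂ a b c d) {M : Type*} [CommMonoid M]
    (hswap : ∃ E₁ : Finset (Sym2 V),
      SwapOpt (twistGraph G V₁ V₂ a b c d).edgeFinset s(a, c) s(b, d) E₁ ∧
      SwapOpt E₁ s(a, d) s(b, c) Gt.edgeFinset)
    {w w' : Sym2 V → M} (hac : w' s(a, c) = w' s(b, d)) (had : w' s(a, d) = w' s(b, c))
    (h1 : ∀ x y, x ∉ V₂ → y ∉ V₂ → x ≠ y → w' s(x, y) = w s(x, y))
    (h2 : ∀ x y, x ∈ V₂ → (y ∈ V₂ ∨ y = a ∨ y = b ∨ y = c ∨ y = d) → x ≠ y →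
      w' s(twistPerm a b c d x, twistPerm a b c d y) = w s(x, y)) :
    ∏ ed ∈ Gt.edgeFinset, w' ed = ∏ ed ∈ G.edgeFinset, w ed := by
  obtain ⟨E₁, hE, hE'⟩ := hswap
  rw [hE'.prod_eq had, hE.prod_eq hac]
  symm
  refine Finset.prod_nbij' (TwistSetup.edgeTwist V₂ a b c d) (TwistSetup.edgeTwist V₂ a b c d)
    ?_ ?_ (fun ed _ => h.edgeTwist_edgeTwist ed) (fun ed _ => h.edgeTwist_edgeTwist ed) ?_
  · intro ed hed
    rw [SimpleGraph.mem_edgeFinset] at hed ⊢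
    exact (h.edgeTwist_mem ed).2 hed
  · intro ed hed
    rw [SimpleGraph.mem_edgeFinset] at hed ⊢
    rwa [← h.edgeTwist_mem, h.edgeTwist_edgeTwist]
  · intro ed hed
    rw [SimpleGraph.mem_edgeFinset] at hed
    induction ed with
    | _ x y =>
      rw [SimpleGraph.mem_edgeSet] at hed
      rw [TwistSetup.edgeTwist_mk]
      by_cases hx : x ∈ V₂
      · rw [if_pos (Or.inl hx), h2 x y hx (h.adj_right hx hed) hed.ne]
      · by_cases hy : y ∈ V₂
        · rw [if_pos (Or.inr hy), Sym2.eq_swap, Sym2.eq_swap (a := twistPerm a b c d x),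
            h2 y x hy (h.adj_right hy hed.symm) hed.ne.symm]
        · rw [if_neg (by tauto), h1 x y hx hy hed.ne]

end Twist

/-! ### Completed primitivity of the twisted graph -/

section Cuts

/-- The indicator function of the pairs of vertices separated by `A`. -/
noncomputable def cutIndicator {V : Type*} (A : Finset V) (ed : Sym2 V) : ℤ :=
  if ∃ x, x ∈ ed ∧ x ∈ A ∧ ∃ y, y ∈ ed ∧ y ∉ A then 1 else 0

theorem cutIndicator_mk {V : Type*} (A : Finset V) (x y : V) :
    cutIndicator A s(x, y) = if (x ∈ A ↔ y ∈ A) then 0 else 1 := by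
  simp only [cutIndicator, Sym2.mem_iff]
  by_cases hx : x ∈ A <;> by_cases hy : y ∈ A <;> simp [hx, hy]

variable {V : Type*} [Fintype V]

theorem sum_cutIndicator (G : SimpleGraph V) (A : Finset V) :
    ∑ ed ∈ G.edgeFinset, cutIndicator A ed = (cutEdges G A).card := by
  rw [cutEdges, Finset.card_filter]
  push_cast
  refine Finset.sum_congr rfl fun ed _ => ?_
  rw [cutIndicator]
  congr

theorem card_cutEdges_compl (G : SimpleGraph V) (A : Finset V) :
    (cutEdges G Aᶜ).card = (cutEdges G A).card := by
  have h : (cutIndicator Aᶜ : Sym2 V → ℤ) = cutIndicator A := by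
    funext ed
    induction ed with
    | _ x y => simp only [cutIndicator_mk, Finset.mem_compl, not_iff_not]
  have := sum_cutIndicator G Aᶜ
  rw [h, sum_cutIndicator] at this
  exact_mod_cast this.symm

/-- For a 4-regular graph connectedness follows from the cut condition: a closed set of vertices
with empty cut has at least two (indeed five) elements, and so has its complement. -/
theorem connected_of_cuts {G : SimpleGraph V} (hreg : ∀ v, G.degree v = 4) (hne : Nonempty V)
    (hcut : ∀ A : Finset V, 2 ≤ A.card → 2 ≤ Aᶜ.card → 4 < (cutEdges G A).card) :
    G.Connected := by
  rw [SimpleGraph.connected_iff]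
  refine ⟨fun u v => ?_, hne⟩
  by_contra huv
  have hcard : ∀ (B : Finset V) (p : V), p ∈ B → (∀ q, G.Adj p q → q ∈ B) → 2 ≤ B.card := by
    intro B p hp hB
    have hsub : G.neighborFinset p ⊆ B := fun q hq => hB q ((G.mem_neighborFinset p q).1 hq)
    have := Finset.card_le_card hsub
    rw [SimpleGraph.card_neighborFinset_eq_degree, hreg] at this
    omega
  have h := hcut (Finset.univ.filter fun x => G.Reachable u x)
    (hcard _ u (by simp) fun q hq => by simpa using hq.reachable)
    (hcard _ v (by simpa using huv) fun q hq => by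
      simp only [Finset.mem_compl, Finset.mem_filter, Finset.mem_univ, true_and]
      exact fun hr => huv (hr.trans hq.symm.reachable))
  have h0 : cutEdges G (Finset.univ.filter fun x => G.Reachable u x) = ∅ := by
    refine Finset.filter_eq_empty_iff.2 fun {ed} hed => ?_
    rw [SimpleGraph.mem_edgeFinset] at hed
    rintro ⟨x, hx, hxA, y, hy, hyA⟩
    simp only [Finset.mem_filter, Finset.mem_univ, true_and] at hxA hyA
    have hxy : x ≠ y := by rintro rfl; exact hyA hxA
    have : ed = s(x, y) := (Sym2.mem_and_mem_iff hxy).1 ⟨hx, hy⟩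
    rw [this, SimpleGraph.mem_edgeSet] at hed
    exact hyA (hxA.trans hed.reachable)
  rw [h0] at h
  simp at h

variable {G Gt : SimpleGraph V} {V₁ V₂ : Finset V} {a b c d : V}

/-- Cuts of the twisted graph that respect the pairs `{a, b}` and `{c, d}`. -/
theorem TwistSetup.cut_invariant (h : TwistSetup G V₁ V₂ a b c d)
    (hswap : ∃ E₁ : Finset (Sym2 V),
      SwapOpt (twistGraph G V₁ V₂ a b c d).edgeFinset s(a, c) s(b, d) E₁ ∧
      SwapOpt E₁ s(a, d) s(b, c) Gt.edgeFinset)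
    {A : Finset V} (hab : a ∈ A ↔ b ∈ A) (hcd : c ∈ A ↔ d ∈ A) :
    (cutEdges Gt A).card = (cutEdges G A).card := by
  have := h.sum_eq hswap (w := cutIndicator A) (w' := cutIndicator A)
    (by simp only [cutIndicator_mk, hab, hcd]) (by simp only [cutIndicator_mk, hab, hcd])
    (fun _ _ _ _ _ => rfl) (by
      intro x y hx hy _
      rw [cutIndicator_mk, cutIndicator_mk, h.perm_right hx]
      rcases hy with hy | rfl | rfl | rfl | rfl
      · rw [h.perm_right hy]
      · simp only [h.perm_a, hab]
      · simp only [h.perm_b, hab]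
      · simp only [h.perm_c, hcd]
      · simp only [h.perm_d, hcd])
  rw [sum_cutIndicator, sum_cutIndicator] at this
  exact_mod_cast this

/-- Cuts of the twisted graph that separate both pairs `{a, b}` and `{c, d}` become cuts of `G`
after complementing them inside `V₂`. -/
theorem TwistSetup.cut_separating (h : TwistSetup G V₁ V₂ a b c d)
    (hswap : ∃ E₁ : Finset (Sym2 V),
      SwapOpt (twistGraph G V₁ V₂ a b c d).edgeFinset s(a, c) s(b, d) E₁ ∧
      SwapOpt E₁ s(a, d) s(b, c) Gt.edgeFinset)
    {A : Finset V} (hab : a ∈ A ↔ b ∉ A) (hcd : c ∈ A ↔ d ∉ A) :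
    (cutEdges Gt A).card =
      (cutEdges G (Finset.univ.filter fun x => if x ∈ V₂ then x ∉ A else x ∈ A)).card := by
  obtain ⟨h1, h2, h3, h4⟩ := h.notMem_right
  have := h.sum_eq hswap (w' := cutIndicator A)
    (w := cutIndicator (Finset.univ.filter fun x => if x ∈ V₂ then x ∉ A else x ∈ A))
    (by
      simp only [cutIndicator_mk, hab, hcd]
      by_cases hb : b ∈ A <;> by_cases hd : d ∈ A <;> simp [hb, hd])
    (by
      simp only [cutIndicator_mk, hab, hcd]
      by_cases hb : b ∈ A <;> by_cases hd : d ∈ A <;> simp [hb, hd])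
    (fun x y hx hy _ => by
      simp only [cutIndicator_mk, Finset.mem_filter, Finset.mem_univ, true_and, hx, hy, if_false])
    (by
      intro x y hx hy _
      simp only [cutIndicator_mk, Finset.mem_filter, Finset.mem_univ, true_and, hx, if_true,
        h.perm_right hx]
      rcases hy with hy | rfl | rfl | rfl | rfl
      · simp only [hy, if_true, h.perm_right hy, not_iff_not]
      · simp only [h.perm_a, h1, if_false, hab, not_iff_not]
      · simp only [h.perm_b, h2, if_false, hab]
        by_cases hx : x ∈ A <;> by_cases hb : y ∈ A <;> simp [hx, hb]
      · simp only [h.perm_c, h3, if_false, hcd, not_iff_not]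
      · simp only [h.perm_d, h4, if_false, hcd]
        by_cases hx : x ∈ A <;> by_cases hb : y ∈ A <;> simp [hx, hb])
  rw [sum_cutIndicator, sum_cutIndicator] at this
  exact_mod_cast this

/-- The cut indicator of `A` minus the indicator of the edges at `q`. In a 4-regular graph its sum
over all edges is the excess over 4 of the size of the cut. -/
noncomputable def cutExcess {V : Type*} (q : V) (A : Finset V) (ed : Sym2 V) : ℤ :=
  cutIndicator A ed - endpointSum (fun i => if i = q then (1 : ℤ) else 0) ed

theorem cutExcess_mk {V : Type*} (q : V) (A : Finset V) (x y : V) :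
    cutExcess q A s(x, y) = (if (x ∈ A ↔ y ∈ A) then 0 else 1) -
      ((if x = q then 1 else 0) + if y = q then 1 else 0) := by
  rw [cutExcess, cutIndicator_mk, endpointSum_mk]

/-- The excess vanishes on a pair of vertices where `B` looks like the singleton `{p}`. -/
theorem cutExcess_eq_zero {V : Type*} {p : V} {B : Finset V} {x y : V} (hxy : x ≠ y)
    (hx : x ∈ B ↔ x = p) (hy : y ∈ B ↔ y = p) : cutExcess p B s(x, y) = 0 := by
  simp only [cutExcess_mk, hx, hy]
  by_cases h1 : x = p
  · have h2 : y ≠ p := fun h2 => hxy (h1.trans h2.symm)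
    simp [h1, h2]
  · by_cases h2 : y = p <;> simp [h1, h2]

theorem sum_cutExcess {G : SimpleGraph V} (hreg : ∀ v, G.degree v = 4) (q : V) (A : Finset V) :
    ∑ ed ∈ G.edgeFinset, cutExcess q A ed = (cutEdges G A).card - 4 := by
  unfold cutExcess
  rw [Finset.sum_sub_distrib, sum_cutIndicator, sum_endpointSum]
  simp [hreg]

/-- Cuts of the twisted graph by a set containing exactly one of the four separating vertices:
the excess splits into the contributions of the two sides. -/
theorem TwistSetup.cut_single (h : TwistSetup G V₁ V₂ a b c d)
    (hswap : ∃ E₁ : Finset (Sym2 V),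
      SwapOpt (twistGraph G V₁ V₂ a b c d).edgeFinset s(a, c) s(b, d) E₁ ∧
      SwapOpt E₁ s(a, d) s(b, c) Gt.edgeFinset)
    (hG : ∀ v, G.degree v = 4) (hGt : ∀ v, Gt.degree v = 4) {A : Finset V} {q : V}
    (hq : q = a ∨ q = b ∨ q = c ∨ q = d)
    (ha : a ∈ A ↔ a = q) (hb : b ∈ A ↔ b = q) (hc : c ∈ A ↔ c = q) (hd : d ∈ A ↔ d = q) :
    ((cutEdges Gt A).card : ℤ) - 4 =
      ((cutEdges G (insert q (A ∩ V₁))).card - 4) +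
      ((cutEdges G (insert (twistPerm a b c d q) (A ∩ V₂))).card - 4) := by
  set τ := twistPerm a b c d with hτ
  have hinj : ∀ x y, τ x = τ y ↔ x = y := fun x y => τ.injective.eq_iff
  have hττ : ∀ x, τ (τ x) = x := h.perm_perm
  have hV12 : ∀ x, x ∈ V₂ → x ∉ V₁ := fun x h2 h1 => Finset.disjoint_left.1 h.disj h1 h2
  obtain ⟨a1, b1, c1, d1⟩ := h.notMem_left
  obtain ⟨a2, b2, c2, d2⟩ := h.notMem_right
  have hqQ : ∀ x, (x = a ∨ x = b ∨ x = c ∨ x = d) → (x ∈ A ↔ x = q) ∧ x ∉ V₁ ∧ x ∉ V₂ := by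
    rintro x (rfl | rfl | rfl | rfl) <;> simp [*]
  have hτQ : ∀ x, (x = a ∨ x = b ∨ x = c ∨ x = d) →
      (τ x = a ∨ τ x = b ∨ τ x = c ∨ τ x = d) := by
    rintro x (rfl | rfl | rfl | rfl)
    · simp [hτ, h.perm_a]
    · simp [hτ, h.perm_b]
    · simp [hτ, h.perm_c]
    · simp [hτ, h.perm_d]
  obtain ⟨hqA, hq1, hq2⟩ := hqQ q hq
  obtain ⟨-, hτq1, hτq2⟩ := hqQ _ (hτQ q hq)
  have hqA' : q ∈ A := hqA.2 rfl
  have tail := h.sum_eq hswap (w' := cutExcess q A)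
    (w := fun ed => cutExcess q (insert q (A ∩ V₁)) ed + cutExcess (τ q) (insert (τ q) (A ∩ V₂)) ed)
    (by rw [cutExcess_eq_zero h.hac ha hc, cutExcess_eq_zero h.hbd hb hd])
    (by rw [cutExcess_eq_zero h.had ha hd, cutExcess_eq_zero h.hbc hb hc])
    (by
      intro x y hx hy hxy
      rw [cutExcess_eq_zero (p := τ q) hxy (by simp [hx]) (by simp [hy]), add_zero, cutExcess_mk, cutExcess_mk]
      have key : ∀ x, x ∉ V₂ → (x ∈ insert q (A ∩ V₁) ↔ x ∈ A) := by
        intro x hx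
        rw [Finset.mem_insert, Finset.mem_inter]
        rcases h.cover x with h1 | h1 | h1
        · have : x ≠ q := fun hc => hq1 (hc ▸ h1)
          simp only [this, h1, and_true, false_or]
        · exact absurd h1 hx
        · simp only [(hqQ x h1).1, (hqQ x h1).2.1, and_false, or_false]
      simp only [key x hx, key y hy])
    (by
      intro x y hx hy hxy
      have h3 : ∀ x, x = τ q ↔ τ x = q := fun x => by rw [← hinj x (τ q), hττ]
      have key1 : ∀ x, (x ∈ V₂ ∨ x = a ∨ x = b ∨ x = c ∨ x = d) →
          (x ∈ insert q (A ∩ V₁) ↔ x = q) := by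
        intro x hx
        rw [Finset.mem_insert, Finset.mem_inter]
        have : x ∉ V₁ := by
          rcases hx with hx | hx
          · exact hV12 x hx
          · exact (hqQ x hx).2.1
        simp only [this, and_false, or_false]
      have key2 : ∀ x, (x ∈ V₂ ∨ x = a ∨ x = b ∨ x = c ∨ x = d) →
          (x ∈ insert (τ q) (A ∩ V₂) ↔ τ x ∈ A) := by
        intro x hx
        rw [Finset.mem_insert, Finset.mem_inter]
        rcases hx with hx | hx
        · have h1 : τ x = x := h.perm_right hx
          have : x ≠ τ q := fun hc => hτq2 (hc ▸ hx)
          simp only [h1, this, hx, and_true, false_or]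
        · have h1 := (hqQ _ (hτQ x hx)).1
          have h2 := (hqQ _ hx).2.2
          simp only [h1, h2, h3, and_false, or_false]
      have hxQ : x ∈ V₂ ∨ x = a ∨ x = b ∨ x = c ∨ x = d := Or.inl hx
      simp only [cutExcess_eq_zero hxy (key1 x hxQ) (key1 y hy), zero_add]
      simp only [cutExcess_mk, key2 x hxQ, key2 y hy, h3, ← hτ])
  rw [sum_cutExcess hGt, Finset.sum_add_distrib, sum_cutExcess hG, sum_cutExcess hG] at tail
  exact tail

/-- In a completed primitive graph a set `insert p B`, with `p` one of the separating vertices and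
`B` containing none of them, has a cut of size at least 4, and more than 4 unless `B` is empty. -/
theorem TwistSetup.le_card_cutEdges_insert (h : TwistSetup G V₁ V₂ a b c d)
    (hG : CompletedPrimitive G) {B : Finset V} {p : V} (hp : p = a ∨ p = b ∨ p = c ∨ p = d)
    (hB : a ∉ B ∧ b ∉ B ∧ c ∉ B ∧ d ∉ B) :
    4 ≤ (cutEdges G (insert p B)).card ∧ (B.Nonempty → 4 < (cutEdges G (insert p B)).card) := by
  obtain ⟨a1, b1, c1, d1⟩ := hB
  have hpB : p ∉ B := by
    rcases hp with rfl | rfl | rfl | rfl <;> assumption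
  have hcompl : 2 ≤ (insert p B)ᶜ.card := by
    have hsub : ({a, b, c, d} : Finset V) \ {p} ⊆ (insert p B)ᶜ := by
      intro x hx
      simp only [Finset.mem_sdiff, Finset.mem_insert, Finset.mem_singleton] at hx
      simp only [Finset.mem_compl, Finset.mem_insert, not_or]
      refine ⟨hx.2, ?_⟩
      rcases hx.1 with rfl | rfl | rfl | rfl <;> assumption
    have h4 : ({a, b, c, d} : Finset V).card = 4 := by
      rw [Finset.card_insert_of_notMem (by simp [h.hab, h.hac, h.had]),
        Finset.card_insert_of_notMem (by simp [h.hbc, h.hbd]),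
        Finset.card_pair h.hcd]
    have h3 := Finset.le_card_sdiff ({p} : Finset V) ({a, b, c, d} : Finset V)
    rw [h4, Finset.card_singleton] at h3
    have := Finset.card_le_card hsub
    omega
  have hlt : B.Nonempty → 4 < (cutEdges G (insert p B)).card := by
    intro hne
    refine hG.2.2.2 _ ?_ hcompl
    rw [Finset.card_insert_of_notMem hpB]
    have := hne.card_pos
    omega
  refine ⟨?_, hlt⟩
  rcases B.eq_empty_or_nonempty with rfl | hne
  · -- The cut around the single vertex `p` consists of its four edges.
    have hs := sum_cutExcess hG.1 p (insert p ∅)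
    have h0 : ∑ ed ∈ G.edgeFinset, cutExcess p (insert p ∅) ed = 0 := by
      refine Finset.sum_eq_zero fun ed hed => ?_
      rw [SimpleGraph.mem_edgeFinset] at hed
      induction ed with
      | _ x y =>
        exact cutExcess_eq_zero (G.mem_edgeSet.1 hed).ne (by simp) (by simp)
    omega
  · exact (hlt hne).le

theorem TwistSetup.completedPrimitive (h : TwistSetup G V₁ V₂ a b c d)
    (hswap : ∃ E₁ : Finset (Sym2 V),
      SwapOpt (twistGraph G V₁ V₂ a b c d).edgeFinset s(a, c) s(b, d) E₁ ∧
      SwapOpt E₁ s(a, d) s(b, c) Gt.edgeFinset)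
    (hG : CompletedPrimitive G) (hreg : ∀ v, Gt.degree v = 4) : CompletedPrimitive Gt := by
  obtain ⟨hGreg, hGconn, hGcard, hGcut⟩ := id hG
  obtain ⟨a2, b2, c2, d2⟩ := h.notMem_right
  -- A set with exactly one of the four separating vertices.
  have single : ∀ (A : Finset V) (q : V), 2 ≤ A.card → (q = a ∨ q = b ∨ q = c ∨ q = d) →
      (a ∈ A ↔ a = q) → (b ∈ A ↔ b = q) → (c ∈ A ↔ c = q) → (d ∈ A ↔ d = q) →
      4 < (cutEdges Gt A).card := by
    intro A q hA hq ha hb hc hd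
    have hsum := h.cut_single hswap hGreg hreg hq ha hb hc hd
    have hqA : q ∈ A := by rcases hq with rfl | rfl | rfl | rfl <;> simp [*]
    have hτq : twistPerm a b c d q = a ∨ twistPerm a b c d q = b ∨ twistPerm a b c d q = c ∨
        twistPerm a b c d q = d := by
      rcases hq with rfl | rfl | rfl | rfl
      · simp [h.perm_a]
      · simp [h.perm_b]
      · simp [h.perm_c]
      · simp [h.perm_d]
    obtain ⟨a1, b1, c1, d1⟩ := h.notMem_left
    obtain ⟨p1, p1'⟩ := h.le_card_cutEdges_insert hG (B := A ∩ V₁) hq (by simp [a1, b1, c1, d1])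
    obtain ⟨p2, p2'⟩ := h.le_card_cutEdges_insert hG (B := A ∩ V₂) hτq (by simp [a2, b2, c2, d2])
    obtain ⟨x, hxA, hxq⟩ := Finset.exists_mem_ne (show 1 < A.card by omega) q
    rcases h.cover x with hx | hx | hx
    · have := p1' ⟨x, Finset.mem_inter.2 ⟨hxA, hx⟩⟩
      omega
    · have := p2' ⟨x, Finset.mem_inter.2 ⟨hxA, hx⟩⟩
      omega
    · exfalso
      rcases hx with rfl | rfl | rfl | rfl
      · exact hxq (ha.1 hxA)
      · exact hxq (hb.1 hxA)
      · exact hxq (hc.1 hxA)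
      · exact hxq (hd.1 hxA)
  have two : ∀ (B : Finset V) (p q : V), p ≠ q → p ∈ B → q ∈ B → 2 ≤ B.card := by
    intro B p q hpq hp hq
    exact Finset.one_lt_card.2 ⟨p, hp, q, hq, hpq⟩
  have hcut : ∀ A : Finset V, 2 ≤ A.card → 2 ≤ Aᶜ.card → 4 < (cutEdges Gt A).card := by
    intro A hA hAc
    have hab := h.hab
    have hac := h.hac
    have had := h.had
    have hbc := h.hbc
    have hbd := h.hbd
    have hcd := h.hcd
    have single' : ∀ q, (q = a ∨ q = b ∨ q = c ∨ q = d) → (a ∉ A ↔ a = q) → (b ∉ A ↔ b = q) →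
        (c ∉ A ↔ c = q) → (d ∉ A ↔ d = q) → 4 < (cutEdges Gt A).card := by
      intro q hq ha hb hc hd
      rw [← card_cutEdges_compl]
      exact single Aᶜ q hAc hq (by rw [Finset.mem_compl, ha]) (by rw [Finset.mem_compl, hb])
        (by rw [Finset.mem_compl, hc]) (by rw [Finset.mem_compl, hd])
    have inv : (a ∈ A ↔ b ∈ A) → (c ∈ A ↔ d ∈ A) → 4 < (cutEdges Gt A).card := by
      intro h1 h2
      rw [h.cut_invariant hswap h1 h2]
      exact hGcut A hA hAc
    have sepr : (a ∈ A ↔ b ∉ A) → (c ∈ A ↔ d ∉ A) → 4 < (cutEdges Gt A).card := by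
      intro h1 h2
      rw [h.cut_separating hswap h1 h2]
      by_cases hb : b ∈ A <;> by_cases hd : d ∈ A <;>
        simp only [hb, hd, not_true, not_false_iff, iff_true, iff_false] at h1 h2
      · exact hGcut _ (two _ b d hbd (by simp [b2, hb]) (by simp [d2, hd]))
          (two _ a c hac (by simp [a2, h1]) (by simp [c2, h2]))
      · exact hGcut _ (two _ b c hbc (by simp [b2, hb]) (by simp [c2, h2]))
          (two _ a d had (by simp [a2, h1]) (by simp [d2, hd]))
      · exact hGcut _ (two _ a d had (by simp [a2, h1]) (by simp [d2, hd]))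
          (two _ b c hbc (by simp [b2, hb]) (by simp [c2, h2]))
      · exact hGcut _ (two _ a c hac (by simp [a2, h1]) (by simp [c2, h2]))
          (two _ b d hbd (by simp [b2, hb]) (by simp [d2, hd]))
    have sgl := fun q => single A q hA
    clear single two hGcut
    have ne := And.intro hab.symm (And.intro hac.symm (And.intro had.symm
      (And.intro hbc.symm (And.intro hbd.symm hcd.symm))))
    by_cases ha : a ∈ A <;> by_cases hb : b ∈ A <;> by_cases hc : c ∈ A <;> by_cases hd : d ∈ A
    · exact inv (by simp [*]) (by simp [*])
    · exact single' d (by simp) (by simp [*]) (by simp [*]) (by simp [*]) (by simp [*])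
    · exact single' c (by simp) (by simp [*]) (by simp [*]) (by simp [*]) (by simp [*])
    · exact inv (by simp [*]) (by simp [*])
    · exact single' b (by simp) (by simp [*]) (by simp [*]) (by simp [*]) (by simp [*])
    · exact sepr (by simp [*]) (by simp [*])
    · exact sepr (by simp [*]) (by simp [*])
    · exact sgl a (by simp) (by simp [*]) (by simp [*]) (by simp [*]) (by simp [*])
    · exact single' a (by simp) (by simp [*]) (by simp [*]) (by simp [*]) (by simp [*])
    · exact sepr (by simp [*]) (by simp [*])
    · exact sepr (by simp [*]) (by simp [*])
    · exact sgl b (by simp) (by simp [*]) (by simp [*]) (by simp [*]) (by simp [*])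
    · exact inv (by simp [*]) (by simp [*])
    · exact sgl c (by simp) (by simp [*]) (by simp [*]) (by simp [*]) (by simp [*])
    · exact sgl d (by simp) (by simp [*]) (by simp [*]) (by simp [*]) (by simp [*])
    · exact inv (by simp [*]) (by simp [*])
  exact ⟨hreg, connected_of_cuts hreg ⟨a⟩ hcut, hGcard, hcut⟩

end Cuts

/-! ### Invariance of the period under the twist -/

section TwistPeriod

variable {V : Type*} [Fintype V] {G Gt : SimpleGraph V} {V₁ V₂ : Finset V} {a b c d : V}

/-- The integrands of `G` and of the twisted graph correspond to each other when the conformal map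
exchanging the positions `(∞, 0, e, t)` of `(a, b, c, d)` with `(0, ∞, t, e)` is applied to the
vertices of `V₂` only. The conformal factors of the four separating vertices are distributed
symmetrically by means of the vertex weights `ρ`, which makes the two swaps invisible. -/
theorem TwistSetup.totalWeight_eq (h : TwistSetup G V₁ V₂ a b c d)
    (hswap : ∃ E₁ : Finset (Sym2 V),
      SwapOpt (twistGraph G V₁ V₂ a b c d).edgeFinset s(a, c) s(b, d) E₁ ∧
      SwapOpt E₁ s(a, d) s(b, c) Gt.edgeFinset)
    (hG : ∀ v, G.degree v = 4) (hGt : ∀ v, Gt.degree v = 4) {e t : R4} (he : ‖e‖ = 1)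
    (ht : t ≠ 0) {R : R4 ≃ₗᵢ[ℝ] R4} (hR1 : R e = ‖t‖⁻¹ • t) (hR2 : R (‖t‖⁻¹ • t) = e)
    {x : V → R4} (hxb : x b = 0) (hxc : x c = e) (hxd : x d = t)
    (hx0 : ∀ i ∈ V₂, x i ≠ 0) :
    totalWeight G a x = (∏ i, if i ∈ V₂ then twistFactor t (x i) ^ 4 else 1) *
      totalWeight Gt a (fun i => if i ∈ V₂ then twistMap R t (x i) else x i) := by
  obtain ⟨a2, b2, c2, d2⟩ := h.notMem_right
  obtain ⟨hab, hac, had, hbc, hbd, hcd, -, -, -, -, -⟩ := id h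
  have htpos : 0 < ‖t‖ := norm_pos_iff.2 ht
  have he0 : e ≠ 0 := by
    rintro rfl; simp at he
  set τ := twistPerm a b c d with hτ
  have hτa : τ a = b := h.perm_a
  have hτb : τ b = a := h.perm_b
  have hτc : τ c = d := h.perm_c
  have hτd : τ d = c := h.perm_d
  set X' : V → R4 := fun i => if i ∈ V₂ then twistMap R t (x i) else x i with hX'
  obtain ⟨r, hr, hrt⟩ : ∃ r : ℝ, 0 < r ∧ ‖t‖ = r ^ 2 :=
    ⟨√‖t‖, Real.sqrt_pos.2 htpos, (Real.sq_sqrt htpos.le).symm⟩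
  set ρ : V → ℝ := fun i => if i = a ∨ i = c then r⁻¹ else if i = b ∨ i = d then r else 1 with hρ
  have hρa : ρ a = r⁻¹ := by simp [hρ]
  have hρc : ρ c = r⁻¹ := by simp [hρ]
  have hρb : ρ b = r := by simp [hρ, hab.symm, hbc]
  have hρd : ρ d = r := by simp [hρ, had.symm, hcd.symm]
  have hρi : ∀ i, i ≠ a → i ≠ b → i ≠ c → i ≠ d → ρ i = 1 := by
    intro i h1 h2 h3 h4; simp [hρ, h1, h2, h3, h4]
  set lam : V → ℝ := fun i => if i = a then ‖t‖ else if i = b then ‖t‖⁻¹ else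
    twistFactor t (x i) with hlam
  have hla : lam a = ‖t‖ := by simp [hlam]
  have hlb : lam b = ‖t‖⁻¹ := by simp [hlam, hab.symm]
  have hlc : lam c = ‖t‖ := by
    simp [hlam, hac.symm, hbc.symm, hxc, twistFactor, he]
  have hld : lam d = ‖t‖⁻¹ := by
    simp only [hlam, had.symm, hbd.symm, hxd, twistFactor, if_false]
    field_simp
  set ψ : V → ℝ := fun i => if i ∈ V₂ then (twistFactor t (x i))⁻¹ else ρ i with hψ
  have hlV : ∀ i ∈ V₂, lam i = twistFactor t (x i) := by
    intro i hi
    obtain ⟨h1, h2, -, -⟩ := h.ne_of_mem_right hi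
    simp [hlam, h1, h2]
  -- The weight `ρ` of the twisted vertex absorbs the conformal factor.
  have hρτ : ∀ i, (i ∈ V₂ ∨ i = a ∨ i = b ∨ i = c ∨ i = d) →
      lam i ≠ 0 ∧ ρ (τ i) = lam i * ψ i := by
    rintro i (hi | rfl | rfl | rfl | rfl)
    · obtain ⟨h1, h2, h3, h4⟩ := h.ne_of_mem_right hi
      have hne := (twistFactor_pos ht (hx0 i hi)).ne'
      rw [show τ i = i from h.perm_right hi, hρi i h1 h2 h3 h4, hlV i hi]
      refine ⟨hne, ?_⟩
      simp only [hψ, hi, if_true]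
      rw [mul_inv_cancel₀ hne]
    · rw [hla, hτa, hρb]
      refine ⟨htpos.ne', ?_⟩
      simp only [hψ, a2, if_false, hρa, hrt]
      field_simp
    · rw [hlb, hτb, hρa]
      refine ⟨(inv_pos.2 htpos).ne', ?_⟩
      simp only [hψ, b2, if_false, hρb, hrt]
      field_simp
    · rw [hlc, hτc, hρd]
      refine ⟨htpos.ne', ?_⟩
      simp only [hψ, c2, if_false, hρc, hrt]
      field_simp
    · rw [hld, hτd, hρc]
      refine ⟨(inv_pos.2 htpos).ne', ?_⟩
      simp only [hψ, d2, if_false, hρd, hrt]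
      field_simp
  have hedge : ∀ i j, (i ∈ V₂ ∨ i = a ∨ i = b ∨ i = c ∨ i = d) →
      (j ∈ V₂ ∨ j = a ∨ j = b ∨ j = c ∨ j = d) → i ≠ j →
      edgeWeight a X' s(τ i, τ j) = (lam i)⁻¹ * (lam j)⁻¹ * edgeWeight a x s(i, j) := by
    intro i j hi hj hij
    have hτiff : ∀ k, τ k = a ↔ k = b := fun k => by rw [← hτb, τ.injective.eq_iff]
    have hrel : edgeWeight a X' s(τ i, τ j) = edgeWeight b (fun k => X' (τ k)) s(i, j) := by
      simp only [edgeWeight_mk, hτiff]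
    rw [hrel]
    refine edgeWeight_twist (S := {k | k ∈ V₂ ∨ k = a ∨ k = b ∨ k = c ∨ k = d}) R ht hab hxb
      (by simp [hτa, hX', b2, hxb]) hla hlb ?_ hi hj hij
    rintro k (hk | hk | hk | rfl | rfl) hka hkb
    · refine ⟨hx0 k hk, ?_, hlV k hk⟩
      rw [show τ k = k from h.perm_right hk]
      simp only [hX', hk, if_true]
    · exact absurd hk hka
    · exact absurd hk hkb
    · refine ⟨by rwa [hxc], ?_, by simp only [hlam, hka, hkb, if_false]⟩
      simp only [hτc, hX', d2, if_false, hxd, hxc, twistMap_left he ht hR1]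
    · refine ⟨by rwa [hxd], ?_, by simp only [hlam, hka, hkb, if_false]⟩
      simp only [hτd, hX', c2, if_false, hxd, hxc, twistMap_right ht hR2]
  have main := h.prod_eq hswap (w' := fun ed => edgeWeight a X' ed * endpointProd ρ ed)
    (w := fun ed => edgeWeight a x ed * endpointProd ψ ed)
    (by
      simp only [edgeWeight_mk, endpointProd_mk, hρa, hρb, hρc, hρd, true_or, if_true, hab.symm,
        had.symm, or_self, if_false, hX', b2, d2, hxb, hxd, zero_sub, norm_neg, hrt]
      field_simp)
    (by
      simp only [edgeWeight_mk, endpointProd_mk, hρa, hρb, hρc, hρd, true_or, if_true, hab.symm,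
        hac.symm, or_self, if_false, hX', b2, c2, hxb, hxc, zero_sub, norm_neg, he]
      field_simp)
    (by
      intro i j hi hj _
      simp only [edgeWeight_mk, endpointProd_mk, hX', hψ, hi, hj, if_false])
    (by
      intro i j hi hj hij
      obtain ⟨hi0, hi1⟩ := hρτ i (Or.inl hi)
      obtain ⟨hj0, hj1⟩ := hρτ j hj
      simp only [← hτ, endpointProd_mk, hedge i j (Or.inl hi) hj hij, hi1, hj1]
      field_simp)
  simp only [Finset.prod_mul_distrib, prod_endpointProd, hG, hGt] at main
  have hρ1 : ∏ i, ρ i ^ 4 = 1 := by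
    rw [← Finset.prod_const_one (s := (Finset.univ : Finset V)) (M := ℝ)]
    refine prod_eq_prod_of_off_four hab hac had hbc hbd hcd ?_ fun i h1 h2 h3 h4 => ?_
    · rw [hρa, hρb, hρc, hρd]
      field_simp
    · rw [hρi i h1 h2 h3 h4, one_pow]
  have hψ1 : (∏ i, if i ∈ V₂ then twistFactor t (x i) ^ 4 else 1) * ∏ i, ψ i ^ 4 = 1 := by
    rw [← Finset.prod_mul_distrib]
    refine Eq.trans ?_ hρ1
    refine Finset.prod_congr rfl fun i _ => ?_
    by_cases hi : i ∈ V₂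
    · obtain ⟨h1, h2, h3, h4⟩ := h.ne_of_mem_right hi
      have hne := (twistFactor_pos ht (hx0 i hi)).ne'
      simp only [hψ, hi, if_true, hρi i h1 h2 h3 h4]
      field_simp
    · simp only [hψ, hi, if_false, one_mul]
  rw [hρ1, mul_one] at main
  unfold totalWeight
  rw [main, mul_left_comm, hψ1, mul_one]

theorem TwistSetup.periodLIntegral_eq (h : TwistSetup G V₁ V₂ a b c d)
    (hswap : ∃ E₁ : Finset (Sym2 V),
      SwapOpt (twistGraph G V₁ V₂ a b c d).edgeFinset s(a, c) s(b, d) E₁ ∧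
      SwapOpt E₁ s(a, d) s(b, c) Gt.edgeFinset)
    (hG : ∀ v, G.degree v = 4) (hGt : ∀ v, Gt.degree v = 4) {e : R4} (he : ‖e‖ = 1) :
    periodLIntegral G a b c e = periodLIntegral Gt a b c e := by
  obtain ⟨hab, hac, had, hbc, hbd, hcd, -, -, -, -, -⟩ := id h
  have hPd : gaugePos a b c e d = none := by
    simp [gaugePos, had.symm, hbd.symm, hcd.symm]
  unfold periodLIntegral
  rw [lintegral_posMeasure_fix hPd (measurable_totalWeight G a).ennreal_ofReal,
    lintegral_posMeasure_fix hPd (measurable_totalWeight Gt a).ennreal_ofReal]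
  refine lintegral_congr_ae ?_
  filter_upwards [ae_ne_zero] with t ht
  have htn : ‖t‖ ≠ 0 := norm_ne_zero_iff.2 ht
  obtain ⟨R, hR1, hR2⟩ := exists_isometry_swap (p := e) (q := ‖t‖⁻¹ • t)
    (by rw [norm_smul, norm_inv, norm_norm, inv_mul_cancel₀ htn, he])
  have hPi : ∀ i ∈ V₂, Function.update (gaugePos a b c e) d (some t) i = none := by
    intro i hi
    obtain ⟨h1, h2, h3, h4⟩ := h.ne_of_mem_right hi
    simp [gaugePos, h1, h2, h3, h4]
  refine lintegral_twist R ht (S := V₂) (ψ := fun _ => id) (fun i hi => ⟨hPi i hi, hPi i hi⟩)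
    (fun _ => measurable_id) (fun _ _ => Measure.map_id) (measurable_totalWeight Gt a) ?_
  filter_upwards [ae_posMeasure (Function.update (gaugePos a b c e) d (some t))] with x hx
  exact h.totalWeight_eq hswap hG hGt he ht hR1 hR2
    ((hx b).1 _ (by simp [gaugePos, hbd]))
    ((hx c).1 _ (by simp [gaugePos, hbc.symm, hcd]))
    ((hx d).1 _ (by simp)) (fun i hi => (hx i).2 (hPi i hi))

end TwistPeriod

/-- **Twist identity.** Let `Γ` be completed primitive with vertex set partitioned as
`V₁ ⊔ V₂ ⊔ {a,b,c,d}` and no edge joining `V₁` to `V₂`.  If the simple 4-regular graph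
`Γ̃` is obtained from the twisted graph `Γ₀` by (possibly) swapping `ac ↔ bd` and/or
`ad ↔ bc`, then `Γ̃` is completed primitive and has the same period as `Γ`. -/
theorem twist_identity {V : Type*} [Fintype V] (G Gt : SimpleGraph V)
    (hG : CompletedPrimitive G)
    (V₁ V₂ : Finset V) (a b c d : V)
    (hab : a ≠ b) (hac : a ≠ c) (had : a ≠ d) (hbc : b ≠ c) (hbd : b ≠ d) (hcd : c ≠ d)
    (hdisj : Disjoint V₁ V₂)
    (hQ1 : a ∉ V₁ ∧ b ∉ V₁ ∧ c ∉ V₁ ∧ d ∉ V₁)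
    (hQ2 : a ∉ V₂ ∧ b ∉ V₂ ∧ c ∉ V₂ ∧ d ∉ V₂)
    (hcover : ∀ x : V, x ∈ V₁ ∨ x ∈ V₂ ∨ x = a ∨ x = b ∨ x = c ∨ x = d)
    (h1ne : V₁.Nonempty) (h2ne : V₂.Nonempty)
    (hsep : ∀ x ∈ V₁, ∀ y ∈ V₂, ¬ G.Adj x y)
    (hswap : ∃ E₁ : Finset (Sym2 V),
      SwapOpt (twistGraph G V₁ V₂ a b c d).edgeFinset s(a, c) s(b, d) E₁ ∧
      SwapOpt E₁ s(a, d) s(b, c) Gt.edgeFinset)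
    (hreg : ∀ v : V, Gt.degree v = 4) :
    CompletedPrimitive Gt ∧
    ∀ (u w z : V) (e : R4) (u' w' z' : V) (e' : R4),
      u ≠ w → u ≠ z → w ≠ z → ‖e‖ = 1 →
      u' ≠ w' → u' ≠ z' → w' ≠ z' → ‖e'‖ = 1 →
      period G u w z e = period Gt u' w' z' e' := by
  have h : TwistSetup G V₁ V₂ a b c d :=
    ⟨hab, hac, had, hbc, hbd, hcd, hdisj, hQ1, hQ2, hcover, hsep⟩
  refine ⟨h.completedPrimitive hswap hG hreg, ?_⟩
  intro u w z e u' w' z' e' huw huz hwz he huw' huz' hwz' he'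
  rw [period, period, positionIntegral_eq G e huw huz hwz,
    positionIntegral_eq Gt e' huw' huz' hwz',
    periodLIntegral_indep hG.1 huw huz hwz hab hac hbc he he,
    h.periodLIntegral_eq hswap hG.1 hreg he,
    periodLIntegral_indep hreg hab hac hbc huw' huz' hwz' he he']
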